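/- Fix δ > 0 and ε > 0. Then there exist C > 0, η > 0 and n₀ such that for all n ≥ n₀ and all M, k with M/N ∈ [δ, 1−δ] and k/n ∈ [δ, 1−δ], with probability at least 1 − exp(−n^η) over G = G_{n,M} the following holds: for all z ∈ ℝ, |P_S(W ≤ √(Σ₁₁)·z) − P(Z' ≤ z)| ≤ C·n^{−1/4+ε}, where Z' is a standard normal random variable and Σ₁₁ = Var_S(W) = (2KK̄/(n²N²(n−2)(n−3)))·(M(N−M) + ((k−2)/(k̄−1))·N·V). -/

import Mathlib

/-!
For a fixed graph `G` the normal approximation is Stein's method. Let `a` be the adjacency matrix of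
`G` centred by `p = M / N`, so that `n W` is the sum of `a u v` over the pairs inside a uniform
`k`-set `S`. For the chain that swaps a vertex of `S` with one of its complement, the function
`ψ(S) = n W(S) + ((k - 1) / n) ∑_{v ∈ S} ∑_u a u v` solves the Poisson equation with right-hand side
`n W`, and reversibility turns this into an integration by parts formula. By Taylor's formula the
Stein discrepancy of `W / σ` is then small if the swap increments are at most `L` and the mean
product of the increments of `ψ` and of `n W` over all swaps is close to its normalisation by `σ²`,
for all `S` outside an exceptional family. The indicator of a half-line is smoothed at scale
`Δ = n^(-1/4)`.

For fixed `S` the increments are linear forms, and the mean product of increments is a quadratic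
form, in the independent edge indicators of `G(n,p)`. Truncating the linear forms at `ℓ √n` and
applying the bounded differences inequality, one finds all these quantities within the required
distance of their means except with probability about `exp(-c ℓ²)`; the same argument applied to `V`
shows that the graph-dependent `Σ₁₁` is close to a deterministic value bounded away from `0`. As
`p = M / N`, conditioning on the number of edges costs only a factor `N + 1`, which carries the
estimates to `G(n,M)`, and Markov's inequality turns a bound for every `S` and most `G` into one for
most `G` and most `S`. The errors are `n^(-1/4)` from smoothing and `Δ⁻¹ L³ / n² = n^(-1/4) ℓ³` from
the Taylor remainder, with `ℓ = n^(ε/4)`.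
-/
open Finset MeasureTheory ProbabilityTheory

noncomputable section

/-- Uniform probability of an event `P` over a finite sample space `Ω`. -/
def Pru {α : Type*} (Ω : Finset α) (P : α → Prop) : ℝ := by
  classical exact ((Ω.filter P).card : ℝ) / Ω.card

/-- Expectation of `f` under the uniform distribution on `Ω`. -/
def Exu {α : Type*} (Ω : Finset α) (f : α → ℝ) : ℝ := (∑ a ∈ Ω, f a) / Ω.card

/-- Variance of `f` under the uniform distribution on `Ω`. -/
def Varu {α : Type*} (Ω : Finset α) (f : α → ℝ) : ℝ := Exu Ω (fun a => (f a - Exu Ω f) ^ 2)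

/-- Conditional expectation of `f` given the value of `g`, under uniform distribution on `Ω`. -/
def condExpU {α β : Type*} (Ω : Finset α) (f : α → ℝ) (g : α → β) (ω : α) : ℝ := by
  classical exact Exu (Ω.filter (fun ω' => g ω' = g ω)) f

/-- The edge set of the complete graph on `[n]`. -/
def completeEdges (n : ℕ) : Finset (Sym2 (Fin n)) := by
  classical exact Finset.univ.filter (fun e => ¬ e.IsDiag)

/-- A finset of `Sym2`s is a graph if it has no loops. -/
def IsGraph {n : ℕ} (G : Finset (Sym2 (Fin n))) : Prop := ∀ e ∈ G, ¬ e.IsDiag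

/-- The sample space of `G_{n,M}`: all graphs on `[n]` with exactly `M` edges. -/
def graphsM (n M : ℕ) : Finset (Finset (Sym2 (Fin n))) := by
  classical exact (completeEdges n).powerset.filter (fun G => G.card = M)

/-- `e(S)`: number of edges of `G` with both endpoints in `S`. -/
def edgesIn {n : ℕ} (G : Finset (Sym2 (Fin n))) (S : Finset (Fin n)) : ℕ := by
  classical exact (G.filter (fun e => ∀ v ∈ e, v ∈ S)).card

/-- `d_S(v)`: number of neighbours of `v` (in graph `G`) lying in `S`. -/
def dS {n : ℕ} (G : Finset (Sym2 (Fin n))) (S : Finset (Fin n)) (v : Fin n) : ℕ := by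
  classical exact (S.filter (fun w => s(v, w) ∈ G)).card

/-- All `k`-element subsets of `[n]`. -/
def kSets (n k : ℕ) : Finset (Finset (Fin n)) := Finset.univ.powersetCard k

/-- Probability of an event under the uniform random graph `G_{n,M}`. -/
def PrGnM (n M : ℕ) (P : Finset (Sym2 (Fin n)) → Prop) : ℝ := Pru (graphsM n M) P

/-- Probability of an event under the binomial random graph `G_{n,p}`. -/
def PrGnp (n : ℕ) (p : ℝ) (P : Finset (Sym2 (Fin n)) → Prop) : ℝ := by
  classical exact ∑ G ∈ (completeEdges n).powerset,
    if (P G) then p ^ G.card * (1 - p) ^ ((completeEdges n).card - G.card) else 0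

/-- `N = n(n-1)/2` as a real number. -/
def Nr (n : ℕ) : ℝ := (n : ℝ) * ((n : ℝ) - 1) / 2

/-- `K = k(k-1)/2` as a real number. -/
def Kr (k : ℕ) : ℝ := (k : ℝ) * ((k : ℝ) - 1) / 2

/-- `λ = ((n²-k²)k²/(2n⁴))·(M(N-M)/N²)`. -/
def lamP (n M k : ℕ) : ℝ :=
  (((n:ℝ)^2 - (k:ℝ)^2) * (k:ℝ)^2 / (2 * (n:ℝ)^4)) * ((M:ℝ) * (Nr n - (M:ℝ)) / (Nr n)^2)

/-- The mean `K·M/N`. -/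
def muP (n M k : ℕ) : ℝ := Kr k * (M:ℝ) / Nr n

/-- `W = (e(S) - K·M/N)/n`. -/
def Wfun (n M k : ℕ) (G : Finset (Sym2 (Fin n))) (S : Finset (Fin n)) : ℝ :=
  ((edgesIn G S : ℝ) - muP n M k) / n

/-- `V = Σ_v d(v)² - n·d(G)²`, i.e. `n` times the degree variance. -/
def Vdeg {n : ℕ} (G : Finset (Sym2 (Fin n))) : ℝ :=
  (∑ v : Fin n, (dS G Finset.univ v : ℝ) ^ 2) - (n:ℝ) * (2 * (G.card : ℝ) / n) ^ 2

/-- Gaussian CDF with mean `m` and variance `v`. -/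
def gaussCdf (m v z : ℝ) : ℝ := ((gaussianReal m v.toNNReal) (Set.Iic z)).toReal

/-- Gaussian measure of a set, mean `m`, variance `v`. -/
def gaussMeas (m v : ℝ) (A : Set ℝ) : ℝ := ((gaussianReal m v.toNNReal) A).toReal

/-- Gaussian density with mean `m` and variance `v`. -/
def gaussPdf (m v x : ℝ) : ℝ := gaussianPDFReal m v.toNNReal x

/-- `P(Y ∈ ·)` for `Y ~ Bin(ν, p)`. -/
def binomPr (ν : ℕ) (p : ℝ) (P : ℕ → Prop) : ℝ := by
  classical exact ∑ j ∈ Finset.range (ν + 1),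
    if (P j) then (ν.choose j : ℝ) * p ^ j * (1 - p) ^ (ν - j) else 0

/-- Sample space for "uniform `k`-set `S`, then uniform `x ∈ S` and `x̄ ∈ S̄`". -/
def SwapΩ (n k : ℕ) : Finset (Σ _ : Finset (Fin n), Fin n × Fin n) :=
  (kSets n k).sigma (fun S => S ×ˢ Sᶜ)

/-- A triple `(a, r, t)` is valid for `β`. -/
def ValidTriple (β : ℝ) (n a r t : ℕ) : Prop :=
  a ≤ r ∧
  (∃ c : ℝ, 1/2 ≤ c ∧ c ≤ 1 ∧ (a : ℝ) = c * (t:ℝ) ^ ((3:ℝ)/2) * (n:ℝ) ^ (2*β - 1/2)) ∧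
  (r : ℝ) ≤ (n:ℝ) ^ (-β) * Real.sqrt ((n:ℝ) * (t:ℝ))

/-! ### The standard normal density and its tail -/

local notation "φ" => gaussianPDFReal 0 1

lemma stdGaussianPDF_eq (x : ℝ) : φ x = (√(2 * Real.pi))⁻¹ * Real.exp (-(1 / 2) * x ^ 2) := by
  simp [gaussianPDFReal, div_eq_inv_mul]

lemma stdGaussianPDF_pos (x : ℝ) : 0 < φ x := gaussianPDFReal_pos _ _ _ one_ne_zero

lemma stdGaussianPDF_neg (x : ℝ) : φ (-x) = φ x := by simp [stdGaussianPDF_eq]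

lemma stdGaussianPDF_le_one (x : ℝ) : φ x ≤ 1 := by
  rw [stdGaussianPDF_eq]
  refine mul_le_one₀ (inv_le_one_of_one_le₀ ?_) (Real.exp_pos _).le ?_
  · exact Real.one_le_sqrt.2 (by linarith [Real.pi_gt_three])
  · exact Real.exp_le_one_iff.2 (by nlinarith [sq_nonneg x])

lemma hasDerivAt_stdGaussianPDF (x : ℝ) : HasDerivAt φ (-(x * φ x)) x := by
  rw [funext stdGaussianPDF_eq]
  have hexponent : HasDerivAt (fun x : ℝ ↦ -(1 / 2) * x ^ 2) (-x) x :=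
    ((hasDerivAt_pow 2 x).const_mul _).congr_deriv (by norm_num; ring)
  exact (hexponent.exp.const_mul _).congr_deriv (by ring)

lemma continuous_stdGaussianPDF : Continuous φ :=
  continuous_iff_continuousAt.2 fun x ↦ (hasDerivAt_stdGaussianPDF x).continuousAt

lemma integrable_pow_mul_stdGaussianPDF (k : ℕ) : Integrable fun x ↦ x ^ k * φ x := by
  have hk := integrable_rpow_mul_exp_neg_mul_sq (b := 1 / 2) (by norm_num)
    (s := k) (neg_one_lt_zero.trans_le k.cast_nonneg)
  refine (hk.const_mul (√(2 * Real.pi))⁻¹).congr (ae_of_all _ fun x ↦ ?_)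
  simp only [stdGaussianPDF_eq, Real.rpow_natCast]
  ring

lemma integrable_mul_stdGaussianPDF : Integrable fun x ↦ x * φ x := by
  simpa using integrable_pow_mul_stdGaussianPDF 1

lemma integral_Ioi_pow_succ_mul_stdGaussianPDF (k : ℕ) (w : ℝ) :
    ∫ x in Set.Ioi w, x ^ (k + 1) * φ x =
      w ^ k * φ w + k * ∫ x in Set.Ioi w, x ^ (k - 1) * φ x := by
  have hderiv : ∀ x ∈ Set.Ici w, HasDerivAt (fun x ↦ x ^ k * φ x)
      (k * (x ^ (k - 1) * φ x) - x ^ (k + 1) * φ x) x := fun x _ ↦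
    ((hasDerivAt_pow k x).fun_mul (hasDerivAt_stdGaussianPDF x)).congr_deriv (by ring)
  have hlower := ((integrable_pow_mul_stdGaussianPDF (k - 1)).const_mul (k : ℝ)).integrableOn
    (s := Set.Ioi w)
  have hupper := (integrable_pow_mul_stdGaussianPDF (k + 1)).integrableOn (s := Set.Ioi w)
  have hFTC := integral_Ioi_of_hasDerivAt_of_tendsto' hderiv (hlower.sub hupper)
    (tendsto_zero_of_hasDerivAt_of_integrableOn_Ioi (fun x hx ↦ hderiv x (Set.mem_Ici_of_Ioi hx))
      (hlower.sub hupper) (integrable_pow_mul_stdGaussianPDF k).integrableOn)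
  rw [integral_sub hlower hupper, integral_const_mul] at hFTC
  linarith

/-- The upper tail `P(Z > w)` of a standard normal variable `Z`. -/
def gaussTail (w : ℝ) : ℝ := ∫ x in Set.Ioi w, φ x

lemma integral_Ioi_mul_stdGaussianPDF (w : ℝ) : ∫ x in Set.Ioi w, x * φ x = φ w := by
  simpa using integral_Ioi_pow_succ_mul_stdGaussianPDF 0 w

lemma integral_Ioi_sub_mul_stdGaussianPDF (w : ℝ) :
    ∫ x in Set.Ioi w, (x - w) * φ x = φ w - w * gaussTail w := by
  simp only [sub_mul]
  rw [integral_sub integrable_mul_stdGaussianPDF.integrableOn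
    ((integrable_gaussianPDFReal 0 1).const_mul w).integrableOn, integral_const_mul,
    integral_Ioi_mul_stdGaussianPDF, gaussTail]

lemma integral_Ioi_sub_sq_mul_stdGaussianPDF (w : ℝ) :
    ∫ x in Set.Ioi w, (x - w) ^ 2 * φ x = (1 + w ^ 2) * gaussTail w - w * φ w := by
  have hexpand (x : ℝ) : (x - w) ^ 2 * φ x = x ^ 2 * φ x - w * (x * φ x) - w * ((x - w) * φ x) := by
    ring
  have hsq := (integrable_pow_mul_stdGaussianPDF 2).integrableOn (s := Set.Ioi w)
  have hid := (integrable_mul_stdGaussianPDF.const_mul w).integrableOn (s := Set.Ioi w)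
  have hsub : IntegrableOn (fun x ↦ x ^ 2 * φ x - w * (x * φ x)) (Set.Ioi w) := hsq.sub hid
  have hcentred : IntegrableOn (fun x ↦ w * ((x - w) * φ x)) (Set.Ioi w) := by
    simp only [sub_mul]
    exact ((integrable_mul_stdGaussianPDF.sub
      ((integrable_gaussianPDFReal 0 1).const_mul w)).const_mul w).integrableOn
  have hmoment := integral_Ioi_pow_succ_mul_stdGaussianPDF 1 w
  simp only [one_add_one_eq_two, pow_one, Nat.cast_one, one_mul, tsub_self, pow_zero] at hmoment
  simp only [hexpand]
  rw [integral_sub hsub hcentred, integral_sub hsq hid, integral_const_mul, integral_const_mul,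
    integral_Ioi_sub_mul_stdGaussianPDF, integral_Ioi_mul_stdGaussianPDF, hmoment, gaussTail]
  ring

lemma mul_gaussTail_le (w : ℝ) : w * gaussTail w ≤ φ w := by
  have hnonneg : 0 ≤ ∫ x in Set.Ioi w, (x - w) * φ x :=
    setIntegral_nonneg measurableSet_Ioi fun x hx ↦
      mul_nonneg (sub_nonneg.2 (le_of_lt hx)) (stdGaussianPDF_pos x).le
  rw [integral_Ioi_sub_mul_stdGaussianPDF] at hnonneg
  linarith

lemma mul_stdGaussianPDF_le (w : ℝ) : w * φ w ≤ (1 + w ^ 2) * gaussTail w := by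
  have hnonneg : 0 ≤ ∫ x in Set.Ioi w, (x - w) ^ 2 * φ x :=
    setIntegral_nonneg measurableSet_Ioi fun x _ ↦
      mul_nonneg (sq_nonneg _) (stdGaussianPDF_pos x).le
  rw [integral_Ioi_sub_sq_mul_stdGaussianPDF] at hnonneg
  linarith

lemma stdGaussianPDF_add_le {w t : ℝ} (hw : 0 ≤ w) (ht : 0 ≤ t) : φ (t + w) ≤ 3 * φ w * φ t := by
  have hsqrt_le : √(2 * Real.pi) ≤ 3 :=
    Real.sqrt_le_iff.2 ⟨by norm_num, by nlinarith [Real.pi_lt_d2]⟩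
  have hexp : φ (t + w) = √(2 * Real.pi) * φ w * φ t * Real.exp (-(t * w)) := by
    have : Real.exp (-(1 / 2) * (t + w) ^ 2) =
        Real.exp (-(1 / 2) * w ^ 2) * Real.exp (-(1 / 2) * t ^ 2) * Real.exp (-(t * w)) := by
      rw [← Real.exp_add, ← Real.exp_add]
      ring_nf
    rw [stdGaussianPDF_eq, stdGaussianPDF_eq, stdGaussianPDF_eq, this]
    field_simp
  have hφw := stdGaussianPDF_pos w
  have hφt := stdGaussianPDF_pos t
  calc φ (t + w) = √(2 * Real.pi) * φ w * φ t * Real.exp (-(t * w)) := hexp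
    _ ≤ √(2 * Real.pi) * φ w * φ t * 1 := by
        gcongr
        exact Real.exp_le_one_iff.2 (neg_nonpos.2 (mul_nonneg ht hw))
    _ ≤ 3 * φ w * φ t := by rw [mul_one]; gcongr

lemma gaussTail_le {w : ℝ} (hw : 0 ≤ w) : gaussTail w ≤ 3 * φ w := by
  have hint := integrable_gaussianPDFReal 0 1
  have hφw := stdGaussianPDF_pos w
  calc gaussTail w = ∫ t in Set.Ioi 0, φ (t + w) := by
        rw [gaussTail, ← (measurePreserving_add_right volume w).setIntegral_preimage_emb
          (measurableEmbedding_addRight w) φ (Set.Ioi w), Set.preimage_add_const_Ioi, sub_self]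
    _ ≤ ∫ t in Set.Ioi 0, 3 * φ w * φ t :=
        setIntegral_mono_on (hint.comp_add_right w).integrableOn (hint.const_mul _).integrableOn
          measurableSet_Ioi fun t ht ↦ stdGaussianPDF_add_le hw (le_of_lt ht)
    _ = 3 * φ w * ∫ t in Set.Ioi 0, φ t := integral_const_mul _ _
    _ ≤ 3 * φ w * 1 := by
        gcongr
        rw [← integral_gaussianPDFReal_eq_one 0 one_ne_zero]
        exact setIntegral_le_integral hint (ae_of_all _ fun x ↦ (stdGaussianPDF_pos x).le)
    _ = 3 * φ w := mul_one _

lemma stdGaussian_real_Iic_add_le (z : ℝ) {Δ : ℝ} (hΔ : 0 ≤ Δ) :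
    (gaussianReal 0 1).real (Set.Iic (z + Δ)) ≤ (gaussianReal 0 1).real (Set.Iic z) + Δ := by
  have hIoc : (gaussianReal 0 1).real (Set.Ioc z (z + Δ)) ≤ Δ := by
    rw [measureReal_def, gaussianReal_apply_eq_integral _ one_ne_zero, ENNReal.toReal_ofReal
      (setIntegral_nonneg measurableSet_Ioc fun x _ ↦ (stdGaussianPDF_pos x).le)]
    calc ∫ x in Set.Ioc z (z + Δ), φ x ≤ ∫ _ in Set.Ioc z (z + Δ), (1 : ℝ) :=
          setIntegral_mono (integrable_gaussianPDFReal 0 1).integrableOn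
            (integrableOn_const (by simp)) stdGaussianPDF_le_one
      _ = Δ := by simp [hΔ]
  rw [← Set.Iic_union_Ioc_eq_Iic (le_add_of_nonneg_right hΔ)]
  exact (measureReal_union_le _ _).trans (by gcongr)

/-! ### Stein's equation -/

section SteinEquation

open scoped NNReal

variable {g : ℝ → ℝ} {B : ℝ} {K : ℝ≥0}

lemma integrable_mul_stdGaussianPDF_of_bounded (hg : Continuous g) (hB : ∀ x, |g x| ≤ B) :
    Integrable fun x ↦ g x * φ x :=
  (integrable_gaussianPDFReal 0 1).bdd_mul hg.aestronglyMeasurable (ae_of_all _ hB)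

lemma abs_integral_Ioi_mul_stdGaussianPDF_le (hB : ∀ x, |g x| ≤ B) (w : ℝ) :
    |∫ x in Set.Ioi w, g x * φ x| ≤ B * gaussTail w := by
  rw [gaussTail, ← integral_const_mul, ← Real.norm_eq_abs]
  refine norm_integral_le_of_norm_le
    ((integrable_gaussianPDFReal 0 1).const_mul B).integrableOn (ae_of_all _ fun x ↦ ?_)
  rw [norm_mul, Real.norm_eq_abs, Real.norm_of_nonneg (stdGaussianPDF_pos x).le]
  exact mul_le_mul_of_nonneg_right (hB x) (stdGaussianPDF_pos x).le

lemma abs_integral_Ioi_sub_mul_stdGaussianPDF_le (hK : LipschitzWith K g) (w : ℝ) :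
    |∫ x in Set.Ioi w, (g x - g w) * φ x| ≤ K * (φ w - w * gaussTail w) := by
  have hlin : Integrable fun x ↦ (x - w) * φ x := by
    simp only [sub_mul]
    exact integrable_mul_stdGaussianPDF.sub ((integrable_gaussianPDFReal 0 1).const_mul w)
  rw [← integral_Ioi_sub_mul_stdGaussianPDF, ← integral_const_mul, ← Real.norm_eq_abs]
  refine norm_integral_le_of_norm_le (hlin.const_mul K).integrableOn
    ((ae_restrict_iff' measurableSet_Ioi).2 (ae_of_all _ fun x hx ↦ ?_))
  have hgx : |g x - g w| ≤ K * (x - w) := by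
    simpa [Real.dist_eq, abs_of_pos (sub_pos.2 (Set.mem_Ioi.1 hx))] using hK.dist_le_mul x w
  rw [norm_mul, Real.norm_eq_abs, Real.norm_of_nonneg (stdGaussianPDF_pos x).le, ← mul_assoc]
  exact mul_le_mul_of_nonneg_right hgx (stdGaussianPDF_pos x).le

lemma integral_Ioi_mul_stdGaussianPDF_eq_add (hg : Continuous g) (hB : ∀ x, |g x| ≤ B) (w : ℝ) :
    ∫ x in Set.Ioi w, g x * φ x =
      (∫ x in Set.Ioi w, (g x - g w) * φ x) + g w * gaussTail w := by
  have hconst := (integrable_gaussianPDFReal 0 1).const_mul (g w)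
  have hint := integrable_mul_stdGaussianPDF_of_bounded hg hB
  simp only [sub_mul]
  rw [integral_sub hint.integrableOn hconst.integrableOn, integral_const_mul, gaussTail,
    sub_add_cancel]

lemma abs_one_add_sq_mul_integral_Ioi_sub_le (hK : LipschitzWith K g) (hB : ∀ x, |g x| ≤ B)
    {w : ℝ} (hw : 0 ≤ w) :
    |(1 + w ^ 2) * (∫ x in Set.Ioi w, g x * φ x) - w * g w * φ w| ≤ (K + 3 * B) * φ w := by
  have hlower := mul_stdGaussianPDF_le w
  have hupper := mul_gaussTail_le w
  have hincrement : (1 + w ^ 2) * |∫ x in Set.Ioi w, (g x - g w) * φ x| ≤ K * φ w :=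
    calc (1 + w ^ 2) * |∫ x in Set.Ioi w, (g x - g w) * φ x|
        ≤ (1 + w ^ 2) * (K * (φ w - w * gaussTail w)) := by
          gcongr
          exact abs_integral_Ioi_sub_mul_stdGaussianPDF_le hK w
      _ = K * ((1 + w ^ 2) * φ w - w * ((1 + w ^ 2) * gaussTail w)) := by ring
      _ ≤ K * φ w := by
          gcongr
          nlinarith [mul_le_mul_of_nonneg_left hlower hw]
  have hvalue : |g w| * ((1 + w ^ 2) * gaussTail w - w * φ w) ≤ 3 * B * φ w :=
    calc |g w| * ((1 + w ^ 2) * gaussTail w - w * φ w)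
        ≤ B * (3 * φ w) := by
          refine mul_le_mul (hB w) ?_ (by linarith) ((abs_nonneg _).trans (hB w))
          nlinarith [gaussTail_le hw, mul_le_mul_of_nonneg_left hupper hw]
      _ = 3 * B * φ w := by ring
  calc |(1 + w ^ 2) * (∫ x in Set.Ioi w, g x * φ x) - w * g w * φ w|
      = |(1 + w ^ 2) * (∫ x in Set.Ioi w, (g x - g w) * φ x) +
          g w * ((1 + w ^ 2) * gaussTail w - w * φ w)| := by
        rw [integral_Ioi_mul_stdGaussianPDF_eq_add hK.continuous hB]
        congr 1
        ring
    _ ≤ (1 + w ^ 2) * |∫ x in Set.Ioi w, (g x - g w) * φ x| +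
          |g w| * ((1 + w ^ 2) * gaussTail w - w * φ w) := by
        refine (abs_add_le _ _).trans_eq ?_
        rw [abs_mul, abs_mul, abs_of_pos (by positivity : 0 < 1 + w ^ 2),
          abs_of_nonneg (sub_nonneg.2 hlower)]
    _ ≤ (K + 3 * B) * φ w := by linarith

/-- The solution `f` of Stein's equation `f' w - w * f w = g w`; when `g` is bounded and
`∫ g * φ = 0`, it is the only bounded one. -/
def steinSol (g : ℝ → ℝ) (w : ℝ) : ℝ := (φ w)⁻¹ * ∫ x in Set.Iic w, g x * φ x

lemma steinSol_eq_integral_Ioi (hg : Continuous g) (hB : ∀ x, |g x| ≤ B)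
    (hmean : ∫ x, g x * φ x = 0) (w : ℝ) :
    steinSol g w = -((φ w)⁻¹ * ∫ x in Set.Ioi w, g x * φ x) := by
  have hint := integrable_mul_stdGaussianPDF_of_bounded hg hB
  have hsplit := intervalIntegral.integral_Iic_add_Ioi (b := w) hint.integrableOn hint.integrableOn
  rw [hmean] at hsplit
  rw [steinSol, eq_neg_of_add_eq_zero_left hsplit, mul_neg]

lemma steinSol_comp_neg (hg : Continuous g) (hB : ∀ x, |g x| ≤ B)
    (hmean : ∫ x, g x * φ x = 0) (w : ℝ) :
    steinSol (fun x ↦ g (-x)) (-w) = -steinSol g w := by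
  have hreflect := integral_comp_neg_Iic (-w) fun x ↦ g x * φ x
  simp only [stdGaussianPDF_neg, neg_neg] at hreflect
  rw [steinSol_eq_integral_Ioi hg hB hmean, neg_neg, steinSol, stdGaussianPDF_neg, hreflect]

lemma integral_comp_neg_mul_stdGaussianPDF (hmean : ∫ x, g x * φ x = 0) :
    ∫ x, g (-x) * φ x = 0 := by
  have hreflect := integral_neg_eq_self (fun x ↦ g x * φ x) volume
  simpa only [stdGaussianPDF_neg, hmean] using hreflect

lemma hasDerivAt_steinSol (hg : Continuous g) (hB : ∀ x, |g x| ≤ B) (w : ℝ) :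
    HasDerivAt (steinSol g) (w * steinSol g w + g w) w := by
  have hint := integrable_mul_stdGaussianPDF_of_bounded hg hB
  have hsplit (w : ℝ) : ∫ x in Set.Iic w, g x * φ x =
      (∫ x in Set.Iic 0, g x * φ x) + ∫ x in (0 : ℝ)..w, g x * φ x := by
    rw [← intervalIntegral.integral_Iic_sub_Iic hint.integrableOn hint.integrableOn,
      add_sub_cancel]
  have hintegral : HasDerivAt (fun w ↦ ∫ x in Set.Iic w, g x * φ x) (g w * φ w) w := by
    rw [funext hsplit]
    exact ((hg.mul continuous_stdGaussianPDF).integral_hasStrictDerivAt 0 w).hasDerivAt.const_add _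
  have hφ := (stdGaussianPDF_pos w).ne'
  refine (((hasDerivAt_stdGaussianPDF w).fun_inv hφ).fun_mul hintegral).congr_deriv ?_
  rw [steinSol]
  field_simp

lemma abs_mul_steinSol_le (hg : Continuous g) (hB : ∀ x, |g x| ≤ B)
    (hmean : ∫ x, g x * φ x = 0) (w : ℝ) : |w * steinSol g w| ≤ B := by
  wlog hw : 0 ≤ w generalizing g w
  · have hreflected := this (hg.comp continuous_neg) (fun x ↦ hB (-x))
      (integral_comp_neg_mul_stdGaussianPDF hmean) (-w) (by linarith)
    rwa [Function.comp_def, steinSol_comp_neg hg hB hmean, neg_mul_neg] at hreflected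
  have hφ := stdGaussianPDF_pos w
  calc |w * steinSol g w| = (φ w)⁻¹ * (w * |∫ x in Set.Ioi w, g x * φ x|) := by
        rw [steinSol_eq_integral_Ioi hg hB hmean, abs_mul, abs_neg, abs_mul, abs_of_nonneg hw,
          abs_of_pos (inv_pos.2 hφ)]
        ring
    _ ≤ (φ w)⁻¹ * (w * (B * gaussTail w)) := by
        gcongr
        exact abs_integral_Ioi_mul_stdGaussianPDF_le hB w
    _ = B * ((φ w)⁻¹ * (w * gaussTail w)) := by ring
    _ ≤ B * ((φ w)⁻¹ * φ w) := by
        gcongr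
        · exact (abs_nonneg _).trans (hB 0)
        · exact mul_gaussTail_le w
    _ = B := by rw [inv_mul_cancel₀ hφ.ne', mul_one]

lemma hasDerivAt_mul_steinSol (hg : Continuous g) (hB : ∀ x, |g x| ≤ B) (w : ℝ) :
    HasDerivAt (fun w ↦ w * steinSol g w) ((1 + w ^ 2) * steinSol g w + w * g w) w :=
  ((hasDerivAt_id' w).fun_mul (hasDerivAt_steinSol hg hB w)).congr_deriv (by ring)

lemma abs_deriv_mul_steinSol_le (hK : LipschitzWith K g) (hB : ∀ x, |g x| ≤ B)
    (hmean : ∫ x, g x * φ x = 0) (w : ℝ) :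
    |(1 + w ^ 2) * steinSol g w + w * g w| ≤ K + 3 * B := by
  wlog hw : 0 ≤ w generalizing g w
  · have hKneg : LipschitzWith K fun x ↦ g (-x) := fun x y ↦ by
      simpa using hK (-x) (-y)
    have hreflected := this hKneg (fun x ↦ hB (-x))
      (integral_comp_neg_mul_stdGaussianPDF hmean) (-w) (by linarith)
    rw [steinSol_comp_neg hK.continuous hB hmean, neg_neg, ← abs_neg] at hreflected
    convert hreflected using 2
    ring
  have hφ := stdGaussianPDF_pos w
  calc |(1 + w ^ 2) * steinSol g w + w * g w|
      = |(1 + w ^ 2) * (∫ x in Set.Ioi w, g x * φ x) - w * g w * φ w| / φ w := by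
        rw [steinSol_eq_integral_Ioi hK.continuous hB hmean, ← abs_of_pos hφ, ← abs_div,
          abs_of_pos hφ, ← abs_neg]
        congr 1
        field_simp
        ring
    _ ≤ K + 3 * B := by
        rw [div_le_iff₀ hφ]
        exact abs_one_add_sq_mul_integral_Ioi_sub_le hK hB hw

lemma lipschitz_mul_steinSol (hK : LipschitzWith K g) (hB : ∀ x, |g x| ≤ B)
    (hmean : ∫ x, g x * φ x = 0) (a b : ℝ) :
    |b * steinSol g b - a * steinSol g a| ≤ (K + 3 * B) * |b - a| :=
  Convex.norm_image_sub_le_of_norm_hasDerivWithin_le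
    (fun w _ ↦ (hasDerivAt_mul_steinSol hK.continuous hB w).hasDerivWithinAt)
    (fun w _ ↦ abs_deriv_mul_steinSol_le hK hB hmean w) convex_univ (Set.mem_univ a)
    (Set.mem_univ b)

lemma abs_steinSol_sub_sub_le (hK : LipschitzWith K g) (hB : ∀ x, |g x| ≤ B)
    (hmean : ∫ x, g x * φ x = 0) (a b : ℝ) :
    |steinSol g b - steinSol g a - (a * steinSol g a + g a) * (b - a)| ≤
      (2 * K + 3 * B) * (b - a) ^ 2 := by
  have hB0 : 0 ≤ B := (abs_nonneg _).trans (hB 0)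
  have hderiv (w : ℝ) : HasDerivAt (fun w ↦ steinSol g w - (a * steinSol g a + g a) * w)
      ((w * steinSol g w + g w) - (a * steinSol g a + g a)) w :=
    ((hasDerivAt_steinSol hK.continuous hB w).fun_sub
      ((hasDerivAt_id' w).const_mul _)).congr_deriv (by rw [mul_one])
  have hderiv_le : ∀ w ∈ Set.uIcc a b,
      |(w * steinSol g w + g w) - (a * steinSol g a + g a)| ≤ (2 * K + 3 * B) * |b - a| :=
    fun w hw ↦ calc
      _ = |(w * steinSol g w - a * steinSol g a) + (g w - g a)| := by ring_nf
      _ ≤ (K + 3 * B) * |w - a| + K * |w - a| :=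
        (abs_add_le _ _).trans
          (add_le_add (lipschitz_mul_steinSol hK hB hmean a w) (hK.dist_le_mul w a))
      _ = (2 * K + 3 * B) * |w - a| := by ring
      _ ≤ (2 * K + 3 * B) * |b - a| := by
        gcongr _ * ?_
        exact Set.abs_sub_left_of_mem_uIcc hw
  have hmvt := Convex.norm_image_sub_le_of_norm_hasDerivWithin_le
    (fun w _ ↦ (hderiv w).hasDerivWithinAt) hderiv_le (convex_uIcc a b) Set.left_mem_uIcc
    Set.right_mem_uIcc
  rw [Real.norm_eq_abs, Real.norm_eq_abs, mul_assoc, ← sq, sq_abs] at hmvt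
  convert hmvt using 2
  ring

lemma exists_solution_steinEquation {h : ℝ → ℝ} (hK : LipschitzWith K h)
    (h01 : ∀ x, h x ∈ Set.Icc 0 1) :
    ∃ f f' : ℝ → ℝ, (∀ w, f' w - w * f w = h w - ∫ x, h x ∂gaussianReal 0 1) ∧
      (∀ w, |f' w| ≤ 2) ∧
      ∀ a b, |f b - f a - f' a * (b - a)| ≤ (2 * K + 3) * (b - a) ^ 2 := by
  set m : ℝ := ∫ x, h x ∂gaussianReal 0 1 with hm
  have hint : Integrable h (gaussianReal 0 1) :=
    .of_bound hK.continuous.aestronglyMeasurable 1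
      (ae_of_all _ fun x ↦ by simpa [abs_of_nonneg (h01 x).1] using (h01 x).2)
  have hm0 : 0 ≤ m := integral_nonneg fun x ↦ (h01 x).1
  have hm1 : m ≤ 1 := by
    simpa using integral_mono hint (integrable_const 1) fun x ↦ (h01 x).2
  have hgK : LipschitzWith K fun x ↦ h x - m := by
    simpa using hK.sub (LipschitzWith.const m)
  have hB (x : ℝ) : |h x - m| ≤ 1 :=
    abs_le.2 ⟨by linarith [(h01 x).1], by linarith [(h01 x).2]⟩
  have hmean : ∫ x, (h x - m) * φ x = 0 := by
    have hcentred : ∫ x, (h x - m) ∂gaussianReal 0 1 = 0 := by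
      rw [integral_sub hint (integrable_const m), ← hm]
      simp
    simpa [integral_gaussianReal_eq_integral_smul one_ne_zero, mul_comm] using hcentred
  refine ⟨steinSol fun x ↦ h x - m, fun w ↦ w * steinSol (fun x ↦ h x - m) w + (h w - m),
    fun w ↦ by ring, fun w ↦ ?_, fun a b ↦ ?_⟩
  · calc _ ≤ 1 + 1 := (abs_add_le _ _).trans
          (add_le_add (abs_mul_steinSol_le hgK.continuous hB hmean w) (hB w))
      _ = 2 := one_add_one_eq_two
  · simpa using abs_steinSol_sub_sub_le hgK hB hmean a b

end SteinEquation

/-! ### Uniform expectations -/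

section UniformExpectation

variable {α β : Type*} {Ω : Finset α}

lemma Exu_mono {f g : α → ℝ} (h : ∀ a ∈ Ω, f a ≤ g a) : Exu Ω f ≤ Exu Ω g :=
  div_le_div_of_nonneg_right (sum_le_sum h) (Nat.cast_nonneg _)

lemma Exu_congr {f g : α → ℝ} (h : ∀ a ∈ Ω, f a = g a) : Exu Ω f = Exu Ω g := by
  rw [Exu, Exu, sum_congr rfl h]

lemma Exu_add (f g : α → ℝ) : Exu Ω (fun a ↦ f a + g a) = Exu Ω f + Exu Ω g := by
  rw [Exu, Exu, Exu, sum_add_distrib, add_div]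

lemma Exu_sub (f g : α → ℝ) : Exu Ω (fun a ↦ f a - g a) = Exu Ω f - Exu Ω g := by
  rw [Exu, Exu, Exu, sum_sub_distrib, sub_div]

lemma Exu_const_mul (c : ℝ) (f : α → ℝ) : Exu Ω (fun a ↦ c * f a) = c * Exu Ω f := by
  rw [Exu, Exu, ← mul_sum, mul_div_assoc]

lemma Exu_const (hΩ : Ω.Nonempty) (c : ℝ) : Exu Ω (fun _ ↦ c) = c := by
  rw [Exu, sum_const, nsmul_eq_mul, mul_div_cancel_left₀ c (Nat.cast_ne_zero.2 hΩ.card_ne_zero)]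

lemma Exu_le_of_forall_le {f : α → ℝ} {c : ℝ} (hc : 0 ≤ c) (h : ∀ a ∈ Ω, f a ≤ c) :
    Exu Ω f ≤ c := by
  obtain rfl | hΩ := Ω.eq_empty_or_nonempty
  · simpa [Exu] using hc
  · exact (Exu_mono h).trans_eq (Exu_const hΩ c)

lemma abs_Exu_le (f : α → ℝ) : |Exu Ω f| ≤ Exu Ω fun a ↦ |f a| := by
  rw [Exu, abs_div, Nat.abs_cast]
  exact div_le_div_of_nonneg_right (abs_sum_le_sum_abs _ _) (Nat.cast_nonneg _)

lemma Exu_comm (Λ : Finset β) (f : α → β → ℝ) :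
    Exu Ω (fun a ↦ Exu Λ (f a)) = Exu Λ fun b ↦ Exu Ω fun a ↦ f a b := by
  simp only [Exu, ← sum_div]
  rw [sum_comm, div_right_comm]

lemma Pru_eq_Exu_indicator (P : α → Prop) : Pru Ω P = Exu Ω ({a | P a}.indicator 1) := by
  classical
  rw [Pru, Exu, ← sum_boole]
  simp only [Set.indicator_apply, Set.mem_ofPred_eq, Pi.one_apply]

lemma Pru_nonneg (P : α → Prop) : 0 ≤ Pru Ω P := div_nonneg (Nat.cast_nonneg _) (Nat.cast_nonneg _)

lemma Pru_mono {P Q : α → Prop} (h : ∀ a ∈ Ω, P a → Q a) : Pru Ω P ≤ Pru Ω Q := by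
  simp only [Pru]
  gcongr with a ha
  exact h a ha

lemma Pru_congr {P Q : α → Prop} (h : ∀ a ∈ Ω, (P a ↔ Q a)) : Pru Ω P = Pru Ω Q :=
  (Pru_mono fun a ha ↦ (h a ha).1).antisymm (Pru_mono fun a ha ↦ (h a ha).2)

lemma Pru_or_le (P Q : α → Prop) : Pru Ω (fun a ↦ P a ∨ Q a) ≤ Pru Ω P + Pru Ω Q := by
  simp only [Pru_eq_Exu_indicator, ← Exu_add]
  refine Exu_mono fun a _ ↦ ?_
  by_cases hP : P a <;> by_cases hQ : Q a <;> simp [hP, hQ]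

lemma Pru_not (hΩ : Ω.Nonempty) (P : α → Prop) : Pru Ω (fun a ↦ ¬P a) = 1 - Pru Ω P := by
  rw [Pru_eq_Exu_indicator, Pru_eq_Exu_indicator, ← Exu_const hΩ 1, ← Exu_sub]
  exact Exu_congr fun a _ ↦ by by_cases hP : P a <;> simp [hP]

lemma Pru_lt_le_of_Exu_le {f : α → ℝ} (hf : ∀ a ∈ Ω, 0 ≤ f a) {s ρ : ℝ} (hs : 0 < s)
    (hE : Exu Ω f ≤ s * ρ) : Pru Ω (fun a ↦ s < f a) ≤ ρ := by
  refine le_of_mul_le_mul_left (le_trans ?_ hE) hs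
  rw [Pru_eq_Exu_indicator, ← Exu_const_mul]
  refine Exu_mono fun a ha ↦ ?_
  by_cases hlt : s < f a
  · simpa [hlt] using hlt.le
  · simpa [hlt] using hf a ha

lemma Pru_lt_Pru_le {Λ : Finset β} {R : α → β → Prop} {s ρ : ℝ} (hs : 0 < s) (hρ : 0 ≤ ρ)
    (h : ∀ b ∈ Λ, Pru Ω (fun a ↦ R a b) ≤ s * ρ) : Pru Ω (fun a ↦ s < Pru Λ (R a)) ≤ ρ := by
  refine Pru_lt_le_of_Exu_le (fun a _ ↦ Pru_nonneg _) hs ?_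
  simp only [Pru_eq_Exu_indicator] at h ⊢
  rw [Exu_comm]
  exact Exu_le_of_forall_le (mul_nonneg hs.le hρ) h

lemma Exu_le_add_Pru_mul {Bad : α → Prop} {f : α → ℝ} {a b s : ℝ} (ha : 0 ≤ a) (hb : 0 ≤ b)
    (hgood : ∀ ω ∈ Ω, ¬Bad ω → f ω ≤ a) (hall : ∀ ω ∈ Ω, f ω ≤ b) (hBad : Pru Ω Bad ≤ s) :
    Exu Ω f ≤ a + s * b := by
  have hpointwise : ∀ ω ∈ Ω, f ω ≤ a + b * {ω | Bad ω}.indicator 1 ω := fun ω hω ↦ by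
    by_cases hBadω : Bad ω
    · simpa [hBadω] using (hall ω hω).trans (le_add_of_nonneg_left ha)
    · simpa [hBadω] using hgood ω hω hBadω
  calc Exu Ω f ≤ Exu Ω (fun _ ↦ a) + b * Pru Ω Bad := by
        rw [Pru_eq_Exu_indicator, ← Exu_const_mul, ← Exu_add]
        exact Exu_mono hpointwise
    _ ≤ a + b * s := by
        gcongr
        exact Exu_le_of_forall_le ha fun _ _ ↦ le_rfl
    _ = a + s * b := by rw [mul_comm]

end UniformExpectation

/-! ### Stein's method for a reversible chain -/

section SteinMethod

open scoped NNReal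

variable {α τ : Type*} {Ω : Finset α}

lemma exists_lipschitzWith_between_indicators (y : ℝ) {Δ : ℝ} (hΔ : 0 < Δ) :
    ∃ h : ℝ → ℝ, LipschitzWith Δ.toNNReal⁻¹ h ∧ (∀ x, (Set.Iic y).indicator 1 x ≤ h x) ∧
      ∀ x, h x ≤ (Set.Iic (y + Δ)).indicator 1 x := by
  refine ⟨fun x ↦ thickenedIndicator hΔ (Set.Iic y) x,
    lipschitzWith_thickenedIndicator hΔ (Set.Iic y),
    fun x ↦ ?_, fun x ↦ ?_⟩
  · refine Set.indicator_le' (fun x hx ↦ ?_) (fun x _ ↦ NNReal.coe_nonneg _) x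
    simp [thickenedIndicator_one hΔ _ hx]
  · refine Set.le_indicator_apply (fun _ ↦ ?_) (fun hx ↦ ?_)
    · exact_mod_cast thickenedIndicator_le_one hΔ _ x
    · refine NNReal.coe_le_coe.2 (thickenedIndicator_zero hΔ _ fun hmem ↦ hx ?_).le
      obtain ⟨w, hw, hdist⟩ := Metric.mem_thickening_iff.1 hmem
      exact Set.mem_Iic.2 (by linarith [Set.mem_Iic.1 hw, (abs_lt.1 hdist).2])

lemma abs_Pru_le_sub_stdGaussian_le_add {X : α → ℝ} {Δ r : ℝ} (hΔ : 0 < Δ)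
    (hsmooth : ∀ h : ℝ → ℝ, LipschitzWith Δ.toNNReal⁻¹ h → (∀ x, h x ∈ Set.Icc 0 1) →
      |Exu Ω (fun a ↦ h (X a)) - ∫ x, h x ∂gaussianReal 0 1| ≤ r) (z : ℝ) :
    |Pru Ω (fun a ↦ X a ≤ z) - (gaussianReal 0 1).real (Set.Iic z)| ≤ Δ + r := by
  have hsandwich (y : ℝ) : ∃ e m : ℝ, |e - m| ≤ r ∧
      Pru Ω (fun a ↦ X a ≤ y) ≤ e ∧ e ≤ Pru Ω (fun a ↦ X a ≤ y + Δ) ∧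
      (gaussianReal 0 1).real (Set.Iic y) ≤ m ∧ m ≤ (gaussianReal 0 1).real (Set.Iic (y + Δ)) := by
    obtain ⟨h, hK, hlower, hupper⟩ := exists_lipschitzWith_between_indicators y hΔ
    have h01 (x : ℝ) : h x ∈ Set.Icc 0 1 :=
      ⟨(Set.indicator_nonneg (fun _ _ ↦ zero_le_one) x).trans (hlower x),
        (hupper x).trans (Set.indicator_le_self' (fun _ _ ↦ zero_le_one) x)⟩
    have hint : Integrable h (gaussianReal 0 1) :=
      .of_bound hK.continuous.aestronglyMeasurable 1
        (ae_of_all _ fun x ↦ by simpa [abs_of_nonneg (h01 x).1] using (h01 x).2)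
    have hindicator (y : ℝ) : Integrable ((Set.Iic y).indicator 1) (gaussianReal 0 1) :=
      (integrable_const (1 : ℝ)).indicator measurableSet_Iic
    refine ⟨_, _, hsmooth h hK h01, ?_, ?_, ?_, ?_⟩
    · rw [Pru_eq_Exu_indicator]
      exact Exu_mono fun a _ ↦ hlower (X a)
    · rw [Pru_eq_Exu_indicator]
      exact Exu_mono fun a _ ↦ hupper (X a)
    · rw [← integral_indicator_one measurableSet_Iic]
      exact integral_mono (hindicator y) hint hlower
    · rw [← integral_indicator_one measurableSet_Iic]
      exact integral_mono hint (hindicator _) hupper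
  obtain ⟨e, m, hem, hPe, -, -, hm⟩ := hsandwich z
  obtain ⟨e', m', hem', -, heP', hm', -⟩ := hsandwich (z - Δ)
  have hCDF := stdGaussian_real_Iic_add_le z hΔ.le
  have hCDF' := stdGaussian_real_Iic_add_le (z - Δ) hΔ.le
  rw [sub_add_cancel] at heP' hCDF'
  rw [abs_le] at hem hem' ⊢
  constructor <;> linarith

/-- Reversibility, with respect to the uniform distribution on `Ω`, of the dynamics which from the
state `S` performs a uniformly random move `t ∈ moves S` and lands in `act S t`: when all states
have equally many moves, `(S, act S t)` is an exchangeable pair. -/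
def IsReversibleOn (Ω : Finset α) (moves : α → Finset τ) (act : α → τ → α) : Prop :=
  ∀ F : α → α → ℝ,
    ∑ S ∈ Ω, ∑ t ∈ moves S, F S (act S t) = ∑ S ∈ Ω, ∑ t ∈ moves S, F (act S t) S

/-- The normalised carré du champ of `ψ` and `X` for the dynamics given by `moves` and `act`. If
these are reversible and `ψ` solves the Poisson equation with right-hand side `-c * X`, its mean is
the second moment of `X`. -/
def carreDuChamp (moves : α → Finset τ) (act : α → τ → α) (c : ℝ) (ψ X : α → ℝ) (S : α) : ℝ :=
  (∑ t ∈ moves S, (ψ (act S t) - ψ S) * (X (act S t) - X S)) / (2 * c)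

/-- The cubic counterpart of `carreDuChamp`, controlling the Taylor remainder in Stein's method. -/
def cubicVariation (moves : α → Finset τ) (act : α → τ → α) (c : ℝ) (ψ X : α → ℝ) (S : α) : ℝ :=
  (∑ t ∈ moves S, |ψ (act S t) - ψ S| * (X (act S t) - X S) ^ 2) / (2 * c)

variable {moves : α → Finset τ} {act : α → τ → α} {c : ℝ} {ψ X : α → ℝ}

namespace IsReversibleOn

lemma Exu_mul_eq_Exu_carreDuChamp (hrev : IsReversibleOn Ω moves act) (hc : c ≠ 0)
    (hψ : ∀ S ∈ Ω, ∑ t ∈ moves S, (ψ (act S t) - ψ S) = -c * X S) (g : α → ℝ) :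
    Exu Ω (fun S ↦ X S * g S) = Exu Ω (carreDuChamp moves act c ψ g) := by
  have hpoisson : ∑ S ∈ Ω, ∑ t ∈ moves S, (ψ (act S t) - ψ S) * g S =
      -c * ∑ S ∈ Ω, X S * g S := by
    rw [mul_sum]
    refine sum_congr rfl fun S hS ↦ ?_
    rw [← sum_mul, hψ S hS, mul_assoc]
  have hreversed := hrev fun S S' ↦ (ψ S' - ψ S) * g S
  have hsplit : ∑ S ∈ Ω, ∑ t ∈ moves S, (ψ (act S t) - ψ S) * (g (act S t) - g S) =
      -(∑ S ∈ Ω, ∑ t ∈ moves S, (ψ S - ψ (act S t)) * g (act S t)) -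
        ∑ S ∈ Ω, ∑ t ∈ moves S, (ψ (act S t) - ψ S) * g S := by
    simp only [← sum_neg_distrib, ← sum_sub_distrib]
    exact sum_congr rfl fun S _ ↦ sum_congr rfl fun t _ ↦ by ring
  have hsum : ∑ S ∈ Ω, carreDuChamp moves act c ψ g S = ∑ S ∈ Ω, X S * g S := by
    simp only [carreDuChamp, ← sum_div]
    rw [hsplit, ← hreversed, hpoisson]
    field_simp
    ring
  rw [Exu, Exu, hsum]

lemma abs_Exu_stein_le (hrev : IsReversibleOn Ω moves act) (hc : 0 < c)
    (hψ : ∀ S ∈ Ω, ∑ t ∈ moves S, (ψ (act S t) - ψ S) = -c * X S) {f f' : ℝ → ℝ} {B : ℝ}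
    (hf' : ∀ w, |f' w| ≤ 2) (hf : ∀ a b, |f b - f a - f' a * (b - a)| ≤ B * (b - a) ^ 2) :
    |Exu Ω (fun S ↦ f' (X S) - X S * f (X S))| ≤
      2 * Exu Ω (fun S ↦ |1 - carreDuChamp moves act c ψ X S|) +
        B * Exu Ω (cubicVariation moves act c ψ X) := by
  have htaylor (S : α) : |f' (X S) * carreDuChamp moves act c ψ X S -
      carreDuChamp moves act c ψ (fun S ↦ f (X S)) S| ≤ B * cubicVariation moves act c ψ X S := by
    rw [carreDuChamp, carreDuChamp, cubicVariation, ← mul_div_assoc, ← mul_div_assoc, ← sub_div,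
      abs_div, abs_of_pos (by positivity : 0 < 2 * c), mul_sum, mul_sum, ← sum_sub_distrib]
    gcongr
    refine (abs_sum_le_sum_abs _ _).trans (sum_le_sum fun t _ ↦ ?_)
    calc _ = |ψ (act S t) - ψ S| *
          |f (X (act S t)) - f (X S) - f' (X S) * (X (act S t) - X S)| := by
          rw [← abs_mul, ← abs_neg]
          ring_nf
      _ ≤ |ψ (act S t) - ψ S| * (B * (X (act S t) - X S) ^ 2) := by
          gcongr
          exact hf _ _
      _ = B * (|ψ (act S t) - ψ S| * (X (act S t) - X S) ^ 2) := by ring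
  rw [Exu_sub, hrev.Exu_mul_eq_Exu_carreDuChamp hc.ne' hψ, ← Exu_sub, ← Exu_const_mul,
    ← Exu_const_mul, ← Exu_add]
  refine (abs_Exu_le _).trans (Exu_mono fun S _ ↦ ?_)
  calc _ = |f' (X S) * (1 - carreDuChamp moves act c ψ X S) +
        (f' (X S) * carreDuChamp moves act c ψ X S -
          carreDuChamp moves act c ψ (fun S ↦ f (X S)) S)| := by ring_nf
    _ ≤ |f' (X S)| * |1 - carreDuChamp moves act c ψ X S| +
        B * cubicVariation moves act c ψ X S := by
      rw [← abs_mul]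
      exact (abs_add_le _ _).trans (add_le_add le_rfl (htaylor S))
    _ ≤ _ := by
      gcongr
      exact hf' _

theorem abs_Pru_le_sub_stdGaussian_le (hrev : IsReversibleOn Ω moves act) (hΩ : Ω.Nonempty)
    (hc : 0 < c) (hψ : ∀ S ∈ Ω, ∑ t ∈ moves S, (ψ (act S t) - ψ S) = -c * X S) {Δ : ℝ}
    (hΔ : 0 < Δ) (hΔ1 : Δ ≤ 1) (z : ℝ) :
    |Pru Ω (fun S ↦ X S ≤ z) - (gaussianReal 0 1).real (Set.Iic z)| ≤
      Δ + (2 * Exu Ω (fun S ↦ |1 - carreDuChamp moves act c ψ X S|) +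
        5 / Δ * Exu Ω (cubicVariation moves act c ψ X)) := by
  refine abs_Pru_le_sub_stdGaussian_le_add hΔ (fun h hK h01 ↦ ?_) z
  obtain ⟨f, f', heq, hf', hf⟩ := exists_solution_steinEquation hK h01
  have hcoef : 2 * (Δ.toNNReal⁻¹ : ℝ≥0) + 3 ≤ 5 / Δ := by
    rw [NNReal.coe_inv, Real.coe_toNNReal Δ hΔ.le]
    calc 2 * Δ⁻¹ + 3 ≤ 2 * Δ⁻¹ + 3 * Δ⁻¹ := by linarith [(one_le_inv₀ hΔ).2 hΔ1]
      _ = 5 / Δ := by ring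
  calc |Exu Ω (fun S ↦ h (X S)) - ∫ x, h x ∂gaussianReal 0 1|
      = |Exu Ω (fun S ↦ f' (X S) - X S * f (X S))| := by
        simp only [heq]
        rw [Exu_sub, Exu_const hΩ]
    _ ≤ _ := hrev.abs_Exu_stein_le hc hψ hf'
        fun a b ↦ (hf a b).trans (mul_le_mul_of_nonneg_right hcoef (sq_nonneg _))

end IsReversibleOn

end SteinMethod

/-! ### Concentration for random subsets with independent elements -/

section BernoulliSubset

variable {ι κ : Type*} {p : ℝ} {E : Finset ι}

/-- Expectation of `F` over the random subset of `E` that contains each element independently with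
probability `p`. -/
def bernoulliExp (p : ℝ) (E : Finset ι) (F : Finset ι → ℝ) : ℝ :=
  ∑ G ∈ E.powerset, p ^ G.card * (1 - p) ^ (E.card - G.card) * F G

/-- Probability that the random subset of `E` that contains each element independently with
probability `p` satisfies `P`. -/
def bernoulliPr (p : ℝ) (E : Finset ι) (P : Finset ι → Prop) : ℝ :=
  bernoulliExp p E ({G | P G}.indicator 1)

lemma bernoulliExp_congr {F F' : Finset ι → ℝ} (h : ∀ G ⊆ E, F G = F' G) :
    bernoulliExp p E F = bernoulliExp p E F' :=
  sum_congr rfl fun G hG ↦ by rw [h G (mem_powerset.1 hG)]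

lemma bernoulliExp_mono (hp : p ∈ Set.Icc 0 1) {F F' : Finset ι → ℝ} (h : ∀ G ⊆ E, F G ≤ F' G) :
    bernoulliExp p E F ≤ bernoulliExp p E F' :=
  sum_le_sum fun G hG ↦ mul_le_mul_of_nonneg_left (h G (mem_powerset.1 hG))
    (mul_nonneg (pow_nonneg hp.1 _) (pow_nonneg (sub_nonneg.2 hp.2) _))

lemma bernoulliExp_const (p c : ℝ) (E : Finset ι) : bernoulliExp p E (fun _ ↦ c) = c := by
  rw [bernoulliExp, ← sum_mul, sum_pow_mul_eq_add_pow, add_sub_cancel, one_pow, one_mul]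

lemma bernoulliExp_add (F F' : Finset ι → ℝ) :
    bernoulliExp p E (fun G ↦ F G + F' G) = bernoulliExp p E F + bernoulliExp p E F' := by
  simp only [bernoulliExp, mul_add, sum_add_distrib]

lemma bernoulliExp_sub (F F' : Finset ι → ℝ) :
    bernoulliExp p E (fun G ↦ F G - F' G) = bernoulliExp p E F - bernoulliExp p E F' := by
  simp only [bernoulliExp, mul_sub, sum_sub_distrib]

lemma bernoulliExp_const_mul (c : ℝ) (F : Finset ι → ℝ) :
    bernoulliExp p E (fun G ↦ c * F G) = c * bernoulliExp p E F := by
  simp only [bernoulliExp, mul_sum, mul_left_comm c]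

lemma bernoulliExp_sum (I : Finset κ) (F : κ → Finset ι → ℝ) :
    bernoulliExp p E (fun G ↦ ∑ i ∈ I, F i G) = ∑ i ∈ I, bernoulliExp p E (F i) := by
  simp only [bernoulliExp, mul_sum]
  exact sum_comm

lemma abs_bernoulliExp_le (hp : p ∈ Set.Icc 0 1) (F : Finset ι → ℝ) :
    |bernoulliExp p E F| ≤ bernoulliExp p E fun G ↦ |F G| := by
  refine (abs_sum_le_sum_abs _ _).trans_eq (sum_congr rfl fun G _ ↦ ?_)
  rw [abs_mul, abs_of_nonneg
    (mul_nonneg (pow_nonneg hp.1 _) (pow_nonneg (sub_nonneg.2 hp.2) _))]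

lemma bernoulliPr_nonneg (hp : p ∈ Set.Icc 0 1) (P : Finset ι → Prop) : 0 ≤ bernoulliPr p E P :=
  (bernoulliExp_const p 0 E).symm.trans_le
    (bernoulliExp_mono hp fun G _ ↦ Set.indicator_nonneg (fun _ _ ↦ zero_le_one) G)

lemma bernoulliPr_mono (hp : p ∈ Set.Icc 0 1) {P Q : Finset ι → Prop}
    (h : ∀ G ⊆ E, P G → Q G) : bernoulliPr p E P ≤ bernoulliPr p E Q := by
  refine bernoulliExp_mono hp fun G hG ↦ ?_
  by_cases hP : P G
  · simp [hP, h G hG hP]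
  · rw [Set.indicator_of_notMem (by simpa using hP)]
    exact Set.indicator_nonneg (fun _ _ ↦ zero_le_one) G

lemma bernoulliPr_or_le (hp : p ∈ Set.Icc 0 1) (P Q : Finset ι → Prop) :
    bernoulliPr p E (fun G ↦ P G ∨ Q G) ≤ bernoulliPr p E P + bernoulliPr p E Q := by
  simp only [bernoulliPr, ← bernoulliExp_add]
  refine bernoulliExp_mono hp fun G _ ↦ ?_
  by_cases hP : P G <;> by_cases hQ : Q G <;> simp [hP, hQ]

lemma bernoulliPr_exists_le (hp : p ∈ Set.Icc 0 1) (I : Finset κ) (P : κ → Finset ι → Prop) :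
    bernoulliPr p E (fun G ↦ ∃ i ∈ I, P i G) ≤ ∑ i ∈ I, bernoulliPr p E (P i) := by
  simp only [bernoulliPr, ← bernoulliExp_sum]
  refine bernoulliExp_mono hp fun G _ ↦ ?_
  have hnonneg (i : κ) (G : Finset ι) : 0 ≤ {G | P i G}.indicator (1 : Finset ι → ℝ) G :=
    Set.indicator_nonneg (fun _ _ ↦ zero_le_one) G
  refine Set.indicator_le' (fun G hG ↦ ?_) (fun G _ ↦ sum_nonneg fun i _ ↦ hnonneg i G) G
  obtain ⟨i, hi, hP⟩ := hG
  exact (Set.indicator_of_mem (s := {G | P i G}) hP 1).symm.trans_le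
    (single_le_sum (fun i _ ↦ hnonneg i G) hi)

lemma exp_le_add_exp_sq (x : ℝ) : Real.exp x ≤ x + Real.exp (x ^ 2) := by
  have hexp_sq := Real.add_one_le_exp (x ^ 2)
  rcases le_or_gt |x| 1 with hx | hx
  · linarith [(abs_le.1 (Real.abs_exp_sub_one_sub_id_le hx)).2]
  · rcases lt_abs.1 hx with hx | hx
    · linarith [Real.exp_le_exp.2 (show x ≤ x ^ 2 by nlinarith)]
    · nlinarith [Real.exp_le_one_iff.2 (show x ≤ 0 by linarith)]

lemma two_point_exp_le (hp : p ∈ Set.Icc 0 1) {a b c : ℝ} (hc : |b - a| ≤ c) :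
    (1 - p) * Real.exp a + p * Real.exp b ≤ Real.exp ((1 - p) * a + p * b + c ^ 2) := by
  have hq : 0 ≤ 1 - p := sub_nonneg.2 hp.2
  set m := (1 - p) * a + p * b with hm
  have hdeviation {x r : ℝ} (hr : r ∈ Set.Icc 0 1) (hx : |x - m| = r * |b - a|) :
      Real.exp x ≤ Real.exp m * (x - m + Real.exp (c ^ 2)) := by
    have hsq : (x - m) ^ 2 ≤ c ^ 2 := sq_le_sq.2 <| by
      rw [hx, abs_of_nonneg ((abs_nonneg _).trans hc)]
      exact (mul_le_of_le_one_left (abs_nonneg _) hr.2).trans hc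
    calc Real.exp x = Real.exp m * Real.exp (x - m) := by rw [← Real.exp_add, add_sub_cancel]
      _ ≤ Real.exp m * (x - m + Real.exp (c ^ 2)) := by
        gcongr
        exact (exp_le_add_exp_sq _).trans (by gcongr)
  have ha : |a - m| = p * |b - a| := by
    rw [show a - m = -(p * (b - a)) by rw [hm]; ring, abs_neg, abs_mul, abs_of_nonneg hp.1]
  have hb : |b - m| = (1 - p) * |b - a| := by
    rw [show b - m = (1 - p) * (b - a) by rw [hm]; ring, abs_mul, abs_of_nonneg hq]
  calc (1 - p) * Real.exp a + p * Real.exp b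
      ≤ (1 - p) * (Real.exp m * (a - m + Real.exp (c ^ 2))) +
        p * (Real.exp m * (b - m + Real.exp (c ^ 2))) :=
        add_le_add (mul_le_mul_of_nonneg_left (hdeviation hp ha) hq)
          (mul_le_mul_of_nonneg_left (hdeviation ⟨hq, by linarith [hp.1]⟩ hb) hp.1)
    _ = Real.exp (m + c ^ 2) := by
        rw [Real.exp_add m]
        linear_combination (-Real.exp m) * hm

variable [DecidableEq ι]

lemma bernoulliExp_insert {e : ι} (he : e ∉ E) (F : Finset ι → ℝ) :
    bernoulliExp p (insert e E) F =
      bernoulliExp p E (fun G ↦ (1 - p) * F G + p * F (insert e G)) := by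
  rw [bernoulliExp, bernoulliExp, sum_powerset_insert he, ← sum_add_distrib]
  refine sum_congr rfl fun G hG ↦ ?_
  have hGE := mem_powerset.1 hG
  rw [card_insert_of_notMem he, card_insert_of_notMem fun h ↦ he (hGE h),
    Nat.sub_add_comm (card_le_card hGE), Nat.add_sub_add_right]
  ring

lemma bernoulliExp_exp_le (hp : p ∈ Set.Icc 0 1) (c : ι → ℝ) (F : Finset ι → ℝ)
    (hF : ∀ e ∈ E, ∀ G, |F (insert e G) - F G| ≤ c e) :
    bernoulliExp p E (fun G ↦ Real.exp (F G)) ≤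
      Real.exp (bernoulliExp p E F + ∑ e ∈ E, c e ^ 2) := by
  induction E using Finset.induction_on generalizing F with
  | empty => simp [bernoulliExp]
  | insert e E he ih =>
    have hF' (e' : ι) (he' : e' ∈ E) (G : Finset ι) :
        |(1 - p) * F (insert e' G) + p * F (insert e (insert e' G)) + c e ^ 2 -
          ((1 - p) * F G + p * F (insert e G) + c e ^ 2)| ≤ c e' := by
      have hG := hF e' (mem_insert_of_mem he') G
      have hinsert := hF e' (mem_insert_of_mem he') (insert e G)
      rw [insert_comm, abs_le] at hinsert
      rw [abs_le] at hG ⊢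
      constructor <;> nlinarith [hp.1, hp.2]
    rw [bernoulliExp_insert he, bernoulliExp_insert he, sum_insert he]
    calc _ ≤ bernoulliExp p E
          fun G ↦ Real.exp ((1 - p) * F G + p * F (insert e G) + c e ^ 2) :=
          bernoulliExp_mono hp fun G _ ↦ two_point_exp_le hp (hF e (mem_insert_self _ _) G)
      _ ≤ _ := ih _ hF'
      _ = _ := by rw [bernoulliExp_add, bernoulliExp_const, add_assoc]

lemma bernoulliPr_le_sub_bernoulliExp_le (hp : p ∈ Set.Icc 0 1) (c : ι → ℝ) (F : Finset ι → ℝ)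
    (hF : ∀ e ∈ E, ∀ G, |F (insert e G) - F G| ≤ c e) {σ t : ℝ} (hσ : 0 < σ)
    (hc : ∑ e ∈ E, c e ^ 2 ≤ σ) (ht : 0 ≤ t) :
    bernoulliPr p E (fun G ↦ t ≤ F G - bernoulliExp p E F) ≤ Real.exp (-(t ^ 2 / (4 * σ))) := by
  -- The optimal parameter in the exponential Markov inequality.
  set θ := t / (2 * σ) with hθ
  set m := bernoulliExp p E F with hm
  have hθ0 : 0 ≤ θ := by positivity
  have hmgf := bernoulliExp_exp_le hp (fun e ↦ θ * c e) (fun G ↦ θ * F G) fun e he G ↦ by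
    rw [← mul_sub, abs_mul, abs_of_nonneg hθ0]
    exact mul_le_mul_of_nonneg_left (hF e he G) hθ0
  rw [bernoulliExp_const_mul, ← hm] at hmgf
  calc _ ≤ bernoulliExp p E fun G ↦ Real.exp (-(θ * (t + m))) * Real.exp (θ * F G) := by
        refine bernoulliExp_mono hp fun G _ ↦ ?_
        rw [← Real.exp_add]
        by_cases hG : t ≤ F G - m
        · rw [Set.indicator_of_mem (by exact hG)]
          exact Real.one_le_exp (by linarith [mul_nonneg hθ0 (sub_nonneg.2 hG)])
        · rw [Set.indicator_of_notMem (by exact hG)]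
          exact (Real.exp_pos _).le
    _ ≤ Real.exp (-(θ * (t + m))) * Real.exp (θ * m + ∑ e ∈ E, (θ * c e) ^ 2) := by
        rw [bernoulliExp_const_mul]
        gcongr
    _ ≤ Real.exp (-(θ * (t + m))) * Real.exp (θ * m + θ ^ 2 * σ) := by
        simp only [mul_pow, ← mul_sum]
        gcongr
    _ = Real.exp (-(t ^ 2 / (4 * σ))) := by
        rw [← Real.exp_add, hθ]
        congr 1
        field_simp
        ring

theorem bernoulliPr_le_abs_sub_bernoulliExp_le (hp : p ∈ Set.Icc 0 1) (c : ι → ℝ)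
    (F : Finset ι → ℝ) (hF : ∀ e ∈ E, ∀ G, |F (insert e G) - F G| ≤ c e) {σ t : ℝ} (hσ : 0 < σ)
    (hc : ∑ e ∈ E, c e ^ 2 ≤ σ) (ht : 0 ≤ t) :
    bernoulliPr p E (fun G ↦ t ≤ |F G - bernoulliExp p E F|) ≤
      2 * Real.exp (-(t ^ 2 / (4 * σ))) := by
  have hupper := bernoulliPr_le_sub_bernoulliExp_le hp c F hF hσ hc ht
  have hlower := bernoulliPr_le_sub_bernoulliExp_le hp c (fun G ↦ (-1) * F G)
    (fun e he G ↦ by rw [← mul_sub, abs_mul, abs_neg, abs_one, one_mul]; exact hF e he G) hσ hc ht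
  rw [bernoulliExp_const_mul] at hlower
  calc _ ≤ _ := bernoulliPr_mono hp fun G _ h ↦
        (le_abs.1 h).imp_right fun h ↦ h.trans_eq (by ring)
    _ ≤ _ := (bernoulliPr_or_le hp _ _).trans (add_le_add hupper hlower)
    _ = _ := (two_mul _).symm

/-- The centred linear form with coefficients `α` in the indicators of `e ∈ G`, `e ∈ E`, when these
have mean `p`. -/
def linForm (p : ℝ) (E : Finset ι) (α : ι → ℝ) (G : Finset ι) : ℝ :=
  ∑ e ∈ E, α e * ((if e ∈ G then 1 else 0) - p)

lemma linForm_insert_of_subset {e : ι} (he : e ∉ E) (α : ι → ℝ) {G : Finset ι} (hG : G ⊆ E) :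
    linForm p (insert e E) α G = linForm p E α G - p * α e := by
  rw [linForm, linForm, sum_insert he, if_neg fun h ↦ he (hG h)]
  ring

lemma linForm_insert_insert {e : ι} (he : e ∉ E) (α : ι → ℝ) (G : Finset ι) :
    linForm p (insert e E) α (insert e G) = linForm p E α G + (1 - p) * α e := by
  have hrest : ∑ x ∈ E, α x * ((if x ∈ insert e G then 1 else 0) - p) = linForm p E α G :=
    sum_congr rfl fun x hx ↦ by simp only [mem_insert, ne_of_mem_of_not_mem hx he, false_or]
  rw [linForm, sum_insert he, hrest, if_pos (mem_insert_self _ _)]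
  ring

lemma bernoulliExp_linForm (p : ℝ) (E : Finset ι) (α : ι → ℝ) :
    bernoulliExp p E (linForm p E α) = 0 := by
  induction E using Finset.induction_on with
  | empty => simp [bernoulliExp, linForm]
  | insert e E he ih =>
    rw [bernoulliExp_insert he, ← ih]
    refine bernoulliExp_congr fun G hG ↦ ?_
    rw [linForm_insert_of_subset he _ hG, linForm_insert_insert he]
    ring

lemma bernoulliExp_linForm_mul (p : ℝ) (E : Finset ι) (α β : ι → ℝ) :
    bernoulliExp p E (fun G ↦ linForm p E α G * linForm p E β G) =
      p * (1 - p) * ∑ e ∈ E, α e * β e := by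
  induction E using Finset.induction_on with
  | empty => simp [bernoulliExp, linForm]
  | insert e E he ih =>
    rw [bernoulliExp_insert he, sum_insert he, mul_add, ← ih, add_comm,
      ← bernoulliExp_const p (p * (1 - p) * (α e * β e)) E, ← bernoulliExp_add]
    refine bernoulliExp_congr fun G hG ↦ ?_
    rw [linForm_insert_of_subset he _ hG, linForm_insert_of_subset he _ hG,
      linForm_insert_insert he, linForm_insert_insert he]
    ring

lemma abs_linForm_insert_sub_le (α : ι → ℝ) {e : ι} (he : e ∈ E) (G : Finset ι) :
    |linForm p E α (insert e G) - linForm p E α G| ≤ |α e| := by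
  rw [linForm, linForm, ← sum_sub_distrib, sum_eq_single_of_mem e he]
  · rw [← mul_sub, abs_mul]
    by_cases heG : e ∈ G <;> simp [heG]
  · intro x _ hx
    simp [mem_insert, hx]

lemma abs_linForm_le (hp : p ∈ Set.Icc 0 1) (α : ι → ℝ) (G : Finset ι) :
    |linForm p E α G| ≤ ∑ e ∈ E, |α e| := by
  refine (abs_sum_le_sum_abs _ _).trans (sum_le_sum fun e _ ↦ ?_)
  rw [abs_mul]
  refine mul_le_of_le_one_right (abs_nonneg _) (abs_le.2 ?_)
  split_ifs <;> constructor <;> linarith [hp.1, hp.2]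

lemma bernoulliPr_le_abs_linForm_le (hp : p ∈ Set.Icc 0 1) {α : ι → ℝ} {A L : ℝ} (hA : 0 < A)
    (hα : ∑ e ∈ E, α e ^ 2 ≤ A) (hL : 0 ≤ L) :
    bernoulliPr p E (fun G ↦ L ≤ |linForm p E α G|) ≤ 2 * Real.exp (-(L ^ 2 / (4 * A))) := by
  simpa [bernoulliExp_linForm] using bernoulliPr_le_abs_sub_bernoulliExp_le hp (fun e ↦ |α e|)
    (linForm p E α) (fun e he G ↦ abs_linForm_insert_sub_le α he G) hA (by simpa using hα) hL

/-- Truncation of `x` to the interval `[-L, L]`. -/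
def clip (L x : ℝ) : ℝ := max (-L) (min x L)

lemma abs_clip_sub_clip_le (L x y : ℝ) : |clip L x - clip L y| ≤ |x - y| := by
  rw [clip, clip, max_comm, max_comm (-L)]
  exact (abs_max_sub_max_le_abs _ _ _).trans
    ((abs_min_sub_min_le_max _ _ _ _).trans (by simp))

lemma abs_clip_le {L : ℝ} (hL : 0 ≤ L) (x : ℝ) : |clip L x| ≤ L :=
  abs_le.2 ⟨le_max_left _ _, max_le (by linarith) (min_le_right _ _)⟩

lemma clip_of_abs_le {L x : ℝ} (h : |x| ≤ L) : clip L x = x := by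
  rw [clip, min_eq_left (abs_le.1 h).2, max_eq_right (abs_le.1 h).1]

lemma abs_clip_le_abs {L : ℝ} (hL : 0 ≤ L) (x : ℝ) : |clip L x| ≤ |x| := by
  simpa [clip_of_abs_le (abs_zero.trans_le hL)] using abs_clip_sub_clip_le L x 0

lemma abs_clip_mul_clip_sub_le {L : ℝ} (hL : 0 ≤ L) (x x' y y' : ℝ) :
    |clip L x * clip L y - clip L x' * clip L y'| ≤ L * (|x - x'| + |y - y'|) :=
  calc _ = |(clip L x - clip L x') * clip L y + clip L x' * (clip L y - clip L y')| := by ring_nf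
    _ ≤ |clip L x - clip L x'| * |clip L y| + |clip L x'| * |clip L y - clip L y'| := by
      rw [← abs_mul, ← abs_mul]
      exact abs_add_le _ _
    _ ≤ |x - x'| * L + L * |y - y'| := by
      exact add_le_add
        (mul_le_mul (abs_clip_sub_clip_le _ _ _) (abs_clip_le hL _) (abs_nonneg _) (abs_nonneg _))
        (mul_le_mul (abs_clip_le hL _) (abs_clip_sub_clip_le _ _ _) (abs_nonneg _) hL)
    _ = _ := by ring

lemma abs_clip_mul_clip_sub_mul_le {L B x y : ℝ} (hL : 0 ≤ L) (hx : |x| ≤ B) (hy : |y| ≤ B) :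
    |clip L x * clip L y - x * y| ≤ 2 * B ^ 2 := by
  have hB : 0 ≤ B := (abs_nonneg _).trans hx
  calc _ ≤ |clip L x| * |clip L y| + |x| * |y| := by
        rw [← abs_mul, ← abs_mul]
        exact abs_sub _ _
    _ ≤ B * B + B * B := by
        gcongr <;> exact (abs_clip_le_abs hL _).trans ‹_›
    _ = 2 * B ^ 2 := by ring

lemma abs_bernoulliExp_clip_mul_sub_le (hp : p ∈ Set.Icc 0 1) {α β : ι → ℝ} {L B r : ℝ}
    (hL : 0 ≤ L) (hα : ∑ e ∈ E, |α e| ≤ B) (hβ : ∑ e ∈ E, |β e| ≤ B)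
    (hr : bernoulliPr p E (fun G ↦ L ≤ |linForm p E α G| ∨ L ≤ |linForm p E β G|) ≤ r) :
    |bernoulliExp p E (fun G ↦ clip L (linForm p E α G) * clip L (linForm p E β G)) -
      p * (1 - p) * ∑ e ∈ E, α e * β e| ≤ 2 * B ^ 2 * r := by
  rw [← bernoulliExp_linForm_mul, ← bernoulliExp_sub]
  refine (abs_bernoulliExp_le hp _).trans
    (le_trans ?_ (mul_le_mul_of_nonneg_left hr (by positivity)))
  rw [bernoulliPr, ← bernoulliExp_const_mul]
  refine bernoulliExp_mono hp fun G _ ↦ ?_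
  by_cases hlarge : L ≤ |linForm p E α G| ∨ L ≤ |linForm p E β G|
  · simpa [hlarge] using abs_clip_mul_clip_sub_mul_le hL
      ((abs_linForm_le hp α G).trans hα) ((abs_linForm_le hp β G).trans hβ)
  · obtain ⟨hsmallα, hsmallβ⟩ := not_or.1 hlarge
    rw [clip_of_abs_le (not_le.1 hsmallα).le, clip_of_abs_le (not_le.1 hsmallβ).le]
    simp [hlarge]

section QuadForm

variable (p E) (I : Finset κ) (α β : κ → ι → ℝ) (L : ℝ)

/-- The quadratic form `∑ i, linForm (α i) * linForm (β i)` with every linear form truncated at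
level `L`, which gives it bounded differences. -/
def clippedQuadForm (G : Finset ι) : ℝ :=
  ∑ i ∈ I, clip L (linForm p E (α i) G) * clip L (linForm p E (β i) G)

/-- The event that one of the linear forms is large enough to be affected by truncation. -/
def ExistsLargeLinForm (G : Finset ι) : Prop :=
  ∃ i ∈ I, L ≤ |linForm p E (α i) G| ∨ L ≤ |linForm p E (β i) G|

variable {p E I α β L}

lemma clippedQuadForm_eq {G : Finset ι} (hG : ¬ExistsLargeLinForm p E I α β L G) :
    clippedQuadForm p E I α β L G = ∑ i ∈ I, linForm p E (α i) G * linForm p E (β i) G := by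
  refine sum_congr rfl fun i hi ↦ ?_
  obtain ⟨hsmallα, hsmallβ⟩ := not_or.1 fun hlarge ↦ hG ⟨i, hi, hlarge⟩
  rw [clip_of_abs_le (not_le.1 hsmallα).le, clip_of_abs_le (not_le.1 hsmallβ).le]

lemma abs_clippedQuadForm_insert_sub_le (hL : 0 ≤ L) {e : ι} (he : e ∈ E) (G : Finset ι) :
    |clippedQuadForm p E I α β L (insert e G) - clippedQuadForm p E I α β L G| ≤
      L * ∑ i ∈ I, (|α i e| + |β i e|) := by
  rw [clippedQuadForm, clippedQuadForm, ← sum_sub_distrib, mul_sum]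
  refine (abs_sum_le_sum_abs _ _).trans (sum_le_sum fun i _ ↦ ?_)
  refine (abs_clip_mul_clip_sub_le hL _ _ _ _).trans ?_
  exact mul_le_mul_of_nonneg_left (add_le_add (abs_linForm_insert_sub_le _ he G)
    (abs_linForm_insert_sub_le _ he G)) hL

lemma bernoulliPr_large_linForm_le (hp : p ∈ Set.Icc 0 1) {a b : ι → ℝ} {A : ℝ} (hA : 0 < A)
    (hL : 0 ≤ L) (ha : ∑ e ∈ E, a e ^ 2 ≤ A) (hb : ∑ e ∈ E, b e ^ 2 ≤ A) :
    bernoulliPr p E (fun G ↦ L ≤ |linForm p E a G| ∨ L ≤ |linForm p E b G|) ≤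
      4 * Real.exp (-(L ^ 2 / (4 * A))) := by
  linarith [bernoulliPr_or_le hp (E := E) (L ≤ |linForm p E a ·|) (L ≤ |linForm p E b ·|),
    bernoulliPr_le_abs_linForm_le hp hA ha hL, bernoulliPr_le_abs_linForm_le hp hA hb hL]

lemma abs_bernoulliExp_clippedQuadForm_sub_le (hp : p ∈ Set.Icc 0 1) {A B : ℝ} (hA : 0 < A)
    (hL : 0 ≤ L) (hα : ∀ i ∈ I, ∑ e ∈ E, α i e ^ 2 ≤ A) (hβ : ∀ i ∈ I, ∑ e ∈ E, β i e ^ 2 ≤ A)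
    (hαB : ∀ i ∈ I, ∑ e ∈ E, |α i e| ≤ B) (hβB : ∀ i ∈ I, ∑ e ∈ E, |β i e| ≤ B) :
    |bernoulliExp p E (clippedQuadForm p E I α β L) -
      p * (1 - p) * ∑ i ∈ I, ∑ e ∈ E, α i e * β i e| ≤
      I.card * (8 * B ^ 2 * Real.exp (-(L ^ 2 / (4 * A)))) := by
  have hsplit : bernoulliExp p E (clippedQuadForm p E I α β L) =
      ∑ i ∈ I, bernoulliExp p E
        fun G ↦ clip L (linForm p E (α i) G) * clip L (linForm p E (β i) G) :=
    bernoulliExp_sum _ _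
  rw [hsplit, mul_sum, ← sum_sub_distrib, ← nsmul_eq_mul]
  refine (abs_sum_le_sum_abs _ _).trans (sum_le_card_nsmul _ _ _ fun i hi ↦ ?_)
  refine (abs_bernoulliExp_clip_mul_sub_le hp hL (hαB i hi) (hβB i hi)
    (bernoulliPr_large_linForm_le hp hA hL (hα i hi) (hβ i hi))).trans_eq ?_
  ring

theorem bernoulliPr_existsLargeLinForm_or_quadForm_le (hp : p ∈ Set.Icc 0 1) {A B D t : ℝ}
    (hE : E.Nonempty) (hA : 0 < A) (hD : 0 < D) (hL : 0 < L) (ht : 0 ≤ t)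
    (hα : ∀ i ∈ I, ∑ e ∈ E, α i e ^ 2 ≤ A) (hβ : ∀ i ∈ I, ∑ e ∈ E, β i e ^ 2 ≤ A)
    (hαB : ∀ i ∈ I, ∑ e ∈ E, |α i e| ≤ B) (hβB : ∀ i ∈ I, ∑ e ∈ E, |β i e| ≤ B)
    (hI : ∀ e ∈ E, ∑ i ∈ I, (|α i e| + |β i e|) ≤ D) :
    bernoulliPr p E (fun G ↦ ExistsLargeLinForm p E I α β L G ∨
      t + I.card * (8 * B ^ 2 * Real.exp (-(L ^ 2 / (4 * A)))) ≤
        |∑ i ∈ I, linForm p E (α i) G * linForm p E (β i) G -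
          p * (1 - p) * ∑ i ∈ I, ∑ e ∈ E, α i e * β i e|) ≤
      I.card * (4 * Real.exp (-(L ^ 2 / (4 * A)))) +
        2 * Real.exp (-(t ^ 2 / (4 * (E.card * (L * D) ^ 2)))) := by
  have hlarge : bernoulliPr p E (ExistsLargeLinForm p E I α β L) ≤
      I.card * (4 * Real.exp (-(L ^ 2 / (4 * A)))) := by
    rw [← nsmul_eq_mul]
    exact (bernoulliPr_exists_le hp I _).trans (sum_le_card_nsmul _ _ _ fun i hi ↦
      bernoulliPr_large_linForm_le hp hA hL.le (hα i hi) (hβ i hi))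
  have hdeviation := bernoulliPr_le_abs_sub_bernoulliExp_le hp (fun _ ↦ L * D)
    (clippedQuadForm p E I α β L)
    (fun e he G ↦ (abs_clippedQuadForm_insert_sub_le hL.le he G).trans
      (mul_le_mul_of_nonneg_left (hI e he) hL.le))
    (σ := E.card * (L * D) ^ 2)
    (mul_pos (Nat.cast_pos.2 hE.card_pos) (by positivity)) (by simp) ht
  have hmean := abs_bernoulliExp_clippedQuadForm_sub_le hp hA hL.le hα hβ hαB hβB
  refine (bernoulliPr_mono hp fun G _ h ↦ ?_).trans
    ((bernoulliPr_or_le hp _ _).trans (add_le_add hlarge hdeviation))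
  refine or_iff_not_imp_left.2 fun hG ↦ ?_
  have hfar := h.resolve_left hG
  rw [← clippedQuadForm_eq hG] at hfar
  linarith [abs_sub_le (clippedQuadForm p E I α β L G)
    (bernoulliExp p E (clippedQuadForm p E I α β L))
    (p * (1 - p) * ∑ i ∈ I, ∑ e ∈ E, α i e * β i e)]

end QuadForm

end BernoulliSubset

/-! ### Conditioning a random subset on its size -/

section FixedSize

lemma choose_succ_mul_pow {N j : ℕ} (hj : j < N) (p : ℝ) :
    (N.choose (j + 1) : ℝ) * p ^ (j + 1) * (1 - p) ^ (N - (j + 1)) * ((j + 1) * (1 - p)) =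
      N.choose j * p ^ j * (1 - p) ^ (N - j) * ((N - j) * p) := by
  have hchoose : (N.choose (j + 1) : ℝ) * (j + 1) = N.choose j * (N - j) := by
    rw [← Nat.cast_sub hj.le]
    exact_mod_cast N.choose_succ_right_eq j
  rw [show N - j = N - (j + 1) + 1 by lia, pow_succ, pow_succ]
  linear_combination p ^ j * p * (1 - p) ^ (N - (j + 1)) * (1 - p) * hchoose

lemma choose_mul_pow_le_mode {N M j : ℕ} (hMN : M < N) (hj : j ≤ N) {p : ℝ} (hp : p * N = M) :
    (N.choose j : ℝ) * p ^ j * (1 - p) ^ (N - j) ≤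
      N.choose M * p ^ M * (1 - p) ^ (N - M) := by
  have hN : (0 : ℝ) < N := Nat.cast_pos.2 (Nat.zero_lt_of_lt hMN)
  have hp0 : 0 ≤ p := nonneg_of_mul_nonneg_left (hp ▸ M.cast_nonneg) hN
  have hp1 : p < 1 := lt_of_mul_lt_mul_right (by rwa [hp, one_mul, Nat.cast_lt]) hN.le
  have := sub_pos.2 hp1
  set t : ℕ → ℝ := fun j ↦ N.choose j * p ^ j * (1 - p) ^ (N - j)
  have hratio (i : ℕ) (hi : i < N) : t (i + 1) * ((i + 1) * (1 - p)) = t i * ((N - i) * p) :=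
    choose_succ_mul_pow hi p
  have ht0 (i : ℕ) : 0 ≤ t i := by positivity
  have hpos (i : ℕ) : 0 < ((i : ℝ) + 1) * (1 - p) := by positivity
  obtain hjM | hjM := le_total j M
  · induction hjM using Nat.decreasingInduction with
    | self => exact le_rfl
    | of_succ i hi ih =>
      refine le_trans (le_of_mul_le_mul_right ?_ (hpos i)) (ih (by lia))
      rw [hratio i (by lia)]
      have hiM : (i : ℝ) + 1 ≤ M := by exact_mod_cast hi
      exact mul_le_mul_of_nonneg_left (by linarith) (ht0 i)
  · induction j, hjM using Nat.le_induction with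
    | base => exact le_rfl
    | succ i hi ih =>
      refine le_trans (le_of_mul_le_mul_right ?_ (hpos i)) (ih (by lia))
      rw [hratio i (by lia)]
      have hiM : (M : ℝ) ≤ i := by exact_mod_cast hi
      exact mul_le_mul_of_nonneg_left (by linarith) (ht0 i)

lemma one_le_add_one_mul_choose_mul_pow {N M : ℕ} (hMN : M < N) {p : ℝ} (hp : p * N = M) :
    1 ≤ ((N : ℝ) + 1) * (N.choose M * p ^ M * (1 - p) ^ (N - M)) :=
  calc (1 : ℝ) = ∑ j ∈ range (N + 1), (N.choose j : ℝ) * p ^ j * (1 - p) ^ (N - j) := by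
        have hbinom := add_pow p (1 - p) N
        rw [add_sub_cancel, one_pow] at hbinom
        exact hbinom.trans (sum_congr rfl fun j _ ↦ by ring)
    _ ≤ (range (N + 1)).card • (N.choose M * p ^ M * (1 - p) ^ (N - M)) :=
        sum_le_card_nsmul _ _ _ fun j hj ↦
          choose_mul_pow_le_mode hMN (Nat.lt_succ_iff.1 (mem_range.1 hj)) hp
    _ = _ := by rw [card_range, nsmul_eq_mul, Nat.cast_succ]

theorem Pru_powersetCard_le {ι : Type*} {E : Finset ι} {M : ℕ} (hM : M < E.card)
    (P : Finset ι → Prop) :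
    Pru (E.powersetCard M) P ≤ (E.card + 1) * bernoulliPr (M / E.card) E P := by
  classical
  have hN : (0 : ℝ) < E.card := Nat.cast_pos.2 (Nat.zero_lt_of_lt hM)
  set p : ℝ := M / E.card with hp
  have hpmem : p ∈ Set.Icc 0 1 :=
    ⟨by positivity, (div_le_one hN).2 (Nat.cast_le.2 hM.le)⟩
  set w : ℝ := p ^ M * (1 - p) ^ (E.card - M) with hw
  have hmode := one_le_add_one_mul_choose_mul_pow hM (div_mul_cancel₀ (M : ℝ) hN.ne')
  have hslice : ∑ G ∈ E.powersetCard M, w * {G | P G}.indicator 1 G ≤ bernoulliPr p E P := by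
    rw [bernoulliPr, bernoulliExp]
    refine le_trans (sum_le_sum fun G hG ↦ ?_) (sum_le_sum_of_subset_of_nonneg
      (fun G hG ↦ mem_powerset.2 (mem_powersetCard.1 hG).1) fun G _ _ ↦ ?_)
    · rw [hw, (mem_powersetCard.1 hG).2]
    · exact mul_nonneg (mul_nonneg (pow_nonneg hpmem.1 _) (pow_nonneg (sub_nonneg.2 hpmem.2) _))
        (Set.indicator_nonneg (fun _ _ ↦ zero_le_one) G)
  have hchoose : (0 : ℝ) < E.card.choose M := Nat.cast_pos.2 (Nat.choose_pos hM.le)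
  have hcount : 0 ≤ ∑ G ∈ E.powersetCard M, ({G | P G}.indicator 1 G : ℝ) :=
    sum_nonneg fun G _ ↦ Set.indicator_nonneg (fun _ _ ↦ zero_le_one) G
  rw [Pru_eq_Exu_indicator, Exu, card_powersetCard, div_le_iff₀ hchoose]
  calc _ ≤ (∑ G ∈ E.powersetCard M, {G | P G}.indicator 1 G) *
        ((E.card + 1) * (E.card.choose M * p ^ M * (1 - p) ^ (E.card - M))) :=
        le_mul_of_one_le_right hcount hmode
    _ = (E.card + 1) * (∑ G ∈ E.powersetCard M, w * {G | P G}.indicator 1 G) *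
        E.card.choose M := by
        rw [← mul_sum, hw]
        ring
    _ ≤ _ := by gcongr

lemma card_completeEdges (n : ℕ) : (completeEdges n).card = n.choose 2 := by
  classical
  simpa [completeEdges, Fintype.card_subtype] using Sym2.card_subtype_not_diag (α := Fin n)

lemma cast_card_completeEdges (n : ℕ) : ((completeEdges n).card : ℝ) = Nr n := by
  rw [card_completeEdges, Nat.cast_choose_two, Nr]

lemma graphsM_eq_powersetCard (n M : ℕ) : graphsM n M = (completeEdges n).powersetCard M := by
  ext G
  simp [graphsM]

end FixedSize

/-! ### The swap chain on `k`-subsets -/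

section SwapChain

lemma abs_sum_column_le {V : Type*} [Fintype V] {a : V → V → ℝ} (ha : ∀ u v, |a u v| ≤ 1)
    (R : Finset V) (v : V) : |∑ u ∈ R, a u v| ≤ Fintype.card V :=
  calc |∑ u ∈ R, a u v| ≤ R.card • 1 :=
        (abs_sum_le_sum_abs _ _).trans (sum_le_card_nsmul _ _ _ fun u _ ↦ ha u v)
    _ ≤ Fintype.card V := by
        rw [nsmul_one]
        exact_mod_cast card_le_univ R

variable {V : Type*} [DecidableEq V]

/-- The set obtained from `S` by exchanging `t.1 ∈ S` for `t.2 ∉ S`. -/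
def swapElem (S : Finset V) (t : V × V) : Finset V := insert t.2 (S.erase t.1)

/-- Half the sum of `a` over `S × S`. For the adjacency matrix of a graph this is the number of
edges inside `S`. -/
def innerWeight (a : V → V → ℝ) (S : Finset V) : ℝ := (∑ u ∈ S, ∑ v ∈ S, a u v) / 2

/-- The increment of `innerWeight a` when `S` becomes `swapElem S t`. -/
def innerWeightIncr (a : V → V → ℝ) (S : Finset V) (t : V × V) : ℝ :=
  ∑ u ∈ S.erase t.1, a u t.2 - ∑ u ∈ S, a u t.1

variable {a : V → V → ℝ} {S : Finset V} {x y : V}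

lemma card_swapElem (hx : x ∈ S) (hy : y ∉ S) : (swapElem S (x, y)).card = S.card := by
  rw [swapElem, card_insert_of_notMem fun h ↦ hy (mem_of_mem_erase h), card_erase_add_one hx]

lemma swapElem_swapElem (hx : x ∈ S) (hy : y ∉ S) : swapElem (swapElem S (x, y)) (y, x) = S := by
  rw [swapElem, swapElem, erase_insert fun h ↦ hy (mem_of_mem_erase h), insert_erase hx]

lemma innerWeight_insert (hsymm : ∀ u v, a u v = a v u) (hdiag : ∀ v, a v v = 0) (hx : x ∉ S) :
    innerWeight a (insert x S) = innerWeight a S + ∑ u ∈ S, a u x := by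
  simp only [innerWeight, sum_insert hx, sum_add_distrib, hdiag, hsymm x]
  ring

lemma innerWeight_swapElem (hsymm : ∀ u v, a u v = a v u) (hdiag : ∀ v, a v v = 0) (hx : x ∈ S)
    (hy : y ∉ S) :
    innerWeight a (swapElem S (x, y)) = innerWeight a S + innerWeightIncr a S (x, y) := by
  have hremove := innerWeight_insert hsymm hdiag (notMem_erase x S)
  rw [insert_erase hx] at hremove
  have hloop : ∑ u ∈ S, a u x = ∑ u ∈ S.erase x, a u x := by
    rw [← add_sum_erase S _ hx, hdiag, zero_add]
  rw [swapElem, innerWeight_insert hsymm hdiag fun h ↦ hy (mem_of_mem_erase h), hremove,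
    innerWeightIncr, hloop]
  ring

variable [Fintype V]

/-- For `β = (k - 1) / |V|` and `a` with total sum zero, the generator of the swap chain on
`k`-subsets maps `poissonSol a β` to a multiple of `innerWeight a`. -/
def poissonSol (a : V → V → ℝ) (β : ℝ) (S : Finset V) : ℝ :=
  innerWeight a S + β * ∑ v ∈ S, ∑ u, a u v

/-- The increment of `poissonSol a β` when `S` becomes `swapElem S t`. -/
def poissonSolIncr (a : V → V → ℝ) (β : ℝ) (S : Finset V) (t : V × V) : ℝ :=
  innerWeightIncr a S t + β * (∑ u, a u t.2 - ∑ u, a u t.1)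

lemma poissonSol_swapElem (hsymm : ∀ u v, a u v = a v u) (hdiag : ∀ v, a v v = 0) (β : ℝ)
    (hx : x ∈ S) (hy : y ∉ S) :
    poissonSol a β (swapElem S (x, y)) = poissonSol a β S + poissonSolIncr a β S (x, y) := by
  rw [poissonSol, innerWeight_swapElem hsymm hdiag hx hy, swapElem,
    sum_insert fun h ↦ hy (mem_of_mem_erase h), poissonSol,
    ← add_sum_erase S (fun v ↦ ∑ u, a u v) hx, poissonSolIncr]
  ring

lemma isReversibleOn_swapElem (k : ℕ) :
    IsReversibleOn ((univ : Finset V).powersetCard k) (fun S ↦ S ×ˢ Sᶜ) swapElem := fun F ↦ by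
  have hmem {S : Finset V} {x y : V} :
      (⟨S, (x, y)⟩ : Σ _ : Finset V, V × V) ∈
          (univ.powersetCard k).sigma (fun S ↦ S ×ˢ Sᶜ) ↔ S.card = k ∧ x ∈ S ∧ y ∉ S := by
    simp only [mem_sigma, mem_powersetCard_univ, mem_product, mem_compl]
  rw [sum_sigma', sum_sigma']
  refine sum_nbij' (fun q ↦ ⟨swapElem q.1 q.2, q.2.swap⟩) (fun q ↦ ⟨swapElem q.1 q.2, q.2.swap⟩)
    ?_ ?_ ?_ ?_ ?_
  case refine_5 =>
    rintro ⟨S, x, y⟩ hq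
    rw [hmem] at hq
    simp only [Prod.swap_prod_mk, swapElem_swapElem hq.2.1 hq.2.2]
  case refine_1 | refine_2 =>
    rintro ⟨S, x, y⟩ hq
    rw [hmem] at hq
    have hxy : x ≠ y := fun h ↦ hq.2.2 (h ▸ hq.2.1)
    exact hmem.2 ⟨(card_swapElem hq.2.1 hq.2.2).trans hq.1, by simp [swapElem],
      by simp [swapElem, hxy]⟩
  case refine_3 | refine_4 =>
    rintro ⟨S, x, y⟩ hq
    rw [hmem] at hq
    simp only [Prod.swap_prod_mk, swapElem_swapElem hq.2.1 hq.2.2]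

lemma sum_compl_sum_eq (hsymm : ∀ u v, a u v = a v u) (S : Finset V) :
    ∑ y ∈ Sᶜ, ∑ u ∈ S, a u y = ∑ v ∈ S, ∑ u, a u v - 2 * innerWeight a S := by
  have hsplit : ∑ v ∈ S, ∑ u, a u v = ∑ v ∈ S, (∑ u ∈ S, a v u + ∑ u ∈ Sᶜ, a v u) := by
    simp only [sum_add_sum_compl, hsymm]
  rw [hsplit, sum_add_distrib, sum_comm, innerWeight]
  ring

lemma sum_innerWeightIncr (hsymm : ∀ u v, a u v = a v u) (S : Finset V) :
    ∑ t ∈ S ×ˢ Sᶜ, innerWeightIncr a S t =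
      ((S.card : ℝ) - 1) * ∑ v ∈ S, ∑ u, a u v -
        2 * ((Fintype.card V : ℝ) - 1) * innerWeight a S := by
  have hcompl : (Sᶜ.card : ℝ) = Fintype.card V - S.card := by
    rw [card_compl, Nat.cast_sub (card_le_univ S)]
  have hgain : ∑ x ∈ S, ∑ y ∈ Sᶜ, ∑ u ∈ S.erase x, a u y =
      ((S.card : ℝ) - 1) * ∑ y ∈ Sᶜ, ∑ u ∈ S, a u y := by
    have herase : ∀ x ∈ S, ∑ y ∈ Sᶜ, ∑ u ∈ S.erase x, a u y =
        ∑ y ∈ Sᶜ, ∑ u ∈ S, a u y - ∑ y ∈ Sᶜ, a x y := fun x hx ↦ by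
      simp only [sum_erase_eq_sub hx, sum_sub_distrib]
    rw [sum_congr rfl herase, sum_sub_distrib, sum_const, nsmul_eq_mul, sum_comm]
    ring
  have hloss : ∑ x ∈ S, ∑ _y ∈ Sᶜ, ∑ u ∈ S, a u x =
      (Fintype.card V - S.card) * (2 * innerWeight a S) := by
    simp only [sum_const, nsmul_eq_mul, hcompl, ← mul_sum]
    rw [innerWeight, sum_comm]
    ring
  simp only [sum_product, innerWeightIncr, sum_sub_distrib]
  rw [hgain, hloss, sum_compl_sum_eq hsymm]
  ring

lemma sum_poissonSolIncr (hsymm : ∀ u v, a u v = a v u) (hsum : ∑ u, ∑ v, a u v = 0) {β : ℝ}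
    (hβ : β * Fintype.card V = S.card - 1) :
    ∑ t ∈ S ×ˢ Sᶜ, poissonSolIncr a β S t =
      -(2 * ((Fintype.card V : ℝ) - 1)) * innerWeight a S := by
  have hcompl : (Sᶜ.card : ℝ) = Fintype.card V - S.card := by
    rw [card_compl, Nat.cast_sub (card_le_univ S)]
  have hcol : ∑ v ∈ Sᶜ, ∑ u, a u v = -∑ v ∈ S, ∑ u, a u v := by
    rw [eq_neg_iff_add_eq_zero, add_comm, sum_add_sum_compl, sum_comm, hsum]
  have hdrift : ∑ t ∈ S ×ˢ Sᶜ, (∑ u, a u t.2 - ∑ u, a u t.1) =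
      -(Fintype.card V : ℝ) * ∑ v ∈ S, ∑ u, a u v := by
    simp only [sum_product, sum_sub_distrib, sum_const, nsmul_eq_mul, ← mul_sum]
    rw [hcol, hcompl]
    ring
  simp only [poissonSolIncr, sum_add_distrib, ← mul_sum]
  rw [hdrift, sum_innerWeightIncr hsymm]
  linear_combination -(∑ v ∈ S, ∑ u, a u v) * hβ

lemma sum_poissonSol_swapElem_sub (hsymm : ∀ u v, a u v = a v u) (hdiag : ∀ v, a v v = 0)
    (hsum : ∑ u, ∑ v, a u v = 0) {β : ℝ}
    (hβ : β * Fintype.card V = S.card - 1) :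
    ∑ t ∈ S ×ˢ Sᶜ, (poissonSol a β (swapElem S t) - poissonSol a β S) =
      -(2 * ((Fintype.card V : ℝ) - 1)) * innerWeight a S := by
  rw [← sum_poissonSolIncr hsymm hsum hβ]
  refine sum_congr rfl fun t ht ↦ ?_
  obtain ⟨hx, hy⟩ := mem_product.1 ht
  rw [poissonSol_swapElem hsymm hdiag β hx (mem_compl.1 hy), add_sub_cancel_left]

lemma abs_innerWeightIncr_le (ha : ∀ u v, |a u v| ≤ 1) (S : Finset V) (t : V × V) :
    |innerWeightIncr a S t| ≤ 2 * Fintype.card V := by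
  rw [innerWeightIncr, two_mul]
  exact (abs_sub _ _).trans (add_le_add (abs_sum_column_le ha _ _) (abs_sum_column_le ha _ _))

lemma abs_poissonSolIncr_le (ha : ∀ u v, |a u v| ≤ 1) {β : ℝ} (hβ : |β| ≤ 1) (S : Finset V)
    (t : V × V) : |poissonSolIncr a β S t| ≤ 4 * Fintype.card V := by
  have hcol : |∑ u, a u t.2 - ∑ u, a u t.1| ≤ 2 * Fintype.card V := by
    rw [two_mul]
    exact (abs_sub _ _).trans (add_le_add (abs_sum_column_le ha _ _) (abs_sum_column_le ha _ _))
  calc |poissonSolIncr a β S t|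
      ≤ |innerWeightIncr a S t| + |β| * |∑ u, a u t.2 - ∑ u, a u t.1| := by
        rw [poissonSolIncr, ← abs_mul]
        exact abs_add_le _ _
    _ ≤ 2 * Fintype.card V + 1 * (2 * Fintype.card V) := by
        gcongr
        exact abs_innerWeightIncr_le ha S t
    _ = _ := by ring

lemma sum_swaps_le {f : V × V → ℝ} {b : ℝ} (hb : 0 ≤ b) (hf : ∀ t ∈ S ×ˢ Sᶜ, f t ≤ b) :
    ∑ t ∈ S ×ˢ Sᶜ, f t ≤ (Fintype.card V : ℝ) ^ 2 * b := by
  refine (sum_le_card_nsmul _ _ _ hf).trans ?_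
  rw [nsmul_eq_mul, card_product, Nat.cast_mul, sq]
  gcongr <;> exact_mod_cast card_le_univ _

/-- The carré du champ of `poissonSol` and `innerWeight`, normalised so that, for
`β = (k - 1) / |V|` and `a` with total sum zero, its mean over the `k`-subsets `S` is the variance
of `innerWeight a S / |V|`. -/
def swapVariance (a : V → V → ℝ) (β : ℝ) (S : Finset V) : ℝ :=
  (∑ t ∈ S ×ˢ Sᶜ, poissonSolIncr a β S t * innerWeightIncr a S t) /
    (4 * ((Fintype.card V : ℝ) - 1) * (Fintype.card V : ℝ) ^ 2)

lemma abs_swapVariance_le (hV : 2 ≤ Fintype.card V) (ha : ∀ u v, |a u v| ≤ 1) {β : ℝ}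
    (hβ : |β| ≤ 1) (S : Finset V) : |swapVariance a β S| ≤ 4 * Fintype.card V := by
  have hV' : (2 : ℝ) ≤ Fintype.card V := by exact_mod_cast hV
  have hden : 0 < 4 * ((Fintype.card V : ℝ) - 1) * (Fintype.card V : ℝ) ^ 2 :=
    mul_pos (by linarith) (by positivity)
  rw [swapVariance, abs_div, abs_of_pos hden, div_le_iff₀ hden]
  calc _ ≤ ∑ t ∈ S ×ˢ Sᶜ, |poissonSolIncr a β S t * innerWeightIncr a S t| :=
        abs_sum_le_sum_abs _ _
    _ ≤ (Fintype.card V : ℝ) ^ 2 * ((4 * Fintype.card V) * (2 * Fintype.card V)) :=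
        sum_swaps_le (by positivity) fun t _ ↦ by
          rw [abs_mul]
          gcongr
          exacts [abs_poissonSolIncr_le ha hβ S t, abs_innerWeightIncr_le ha S t]
    _ = 8 * (Fintype.card V : ℝ) ^ 3 * (Fintype.card V : ℝ) := by ring
    _ ≤ 8 * (Fintype.card V : ℝ) ^ 3 * (2 * ((Fintype.card V : ℝ) - 1)) := by
        gcongr
        linarith
    _ = _ := by ring

section NormalApproximation

variable {σ : ℝ}

lemma carreDuChamp_swapElem (hsymm : ∀ u v, a u v = a v u) (hdiag : ∀ v, a v v = 0) (β σ : ℝ)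
    (S : Finset V) :
    carreDuChamp (fun S ↦ S ×ˢ Sᶜ) swapElem (2 * ((Fintype.card V : ℝ) - 1))
      (fun S ↦ poissonSol a β S / (Fintype.card V * σ))
      (fun S ↦ innerWeight a S / (Fintype.card V * σ)) S = swapVariance a β S / σ ^ 2 := by
  have hsum : ∑ t ∈ S ×ˢ Sᶜ, (poissonSol a β (swapElem S t) / (Fintype.card V * σ) -
      poissonSol a β S / (Fintype.card V * σ)) *
        (innerWeight a (swapElem S t) / (Fintype.card V * σ) -
          innerWeight a S / (Fintype.card V * σ)) =
      (∑ t ∈ S ×ˢ Sᶜ, poissonSolIncr a β S t * innerWeightIncr a S t) /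
        (Fintype.card V * σ) ^ 2 := by
    rw [sum_div]
    refine sum_congr rfl fun t ht ↦ ?_
    obtain ⟨hx, hy⟩ := mem_product.1 ht
    rw [poissonSol_swapElem hsymm hdiag β hx (mem_compl.1 hy),
      innerWeight_swapElem hsymm hdiag hx (mem_compl.1 hy)]
    ring
  rw [carreDuChamp, hsum, swapVariance, div_div, div_div]
  ring

lemma cubicVariation_swapElem_le (hsymm : ∀ u v, a u v = a v u) (hdiag : ∀ v, a v v = 0)
    (hV : 2 ≤ Fintype.card V) (hσ : 0 < σ) {β c₁ c₂ : ℝ} (hc₁ : 0 ≤ c₁)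
    (h₁ : ∀ t ∈ S ×ˢ Sᶜ, |poissonSolIncr a β S t| ≤ c₁)
    (h₂ : ∀ t ∈ S ×ˢ Sᶜ, |innerWeightIncr a S t| ≤ c₂) :
    cubicVariation (fun S ↦ S ×ˢ Sᶜ) swapElem (2 * ((Fintype.card V : ℝ) - 1))
      (fun S ↦ poissonSol a β S / (Fintype.card V * σ))
      (fun S ↦ innerWeight a S / (Fintype.card V * σ)) S ≤
        c₁ * c₂ ^ 2 / (2 * (Fintype.card V : ℝ) ^ 2 * σ ^ 3) := by
  have hV' : (2 : ℝ) ≤ Fintype.card V := by exact_mod_cast hV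
  set n := (Fintype.card V : ℝ)
  have hterm : ∀ t ∈ S ×ˢ Sᶜ,
      |poissonSol a β (swapElem S t) / (n * σ) - poissonSol a β S / (n * σ)| *
        (innerWeight a (swapElem S t) / (n * σ) - innerWeight a S / (n * σ)) ^ 2 ≤
      c₁ * c₂ ^ 2 / (n * σ) ^ 3 := fun t ht ↦ by
    obtain ⟨hx, hy⟩ := mem_product.1 ht
    have h₂' : innerWeightIncr a S t ^ 2 ≤ c₂ ^ 2 :=
      sq_le_sq.2 ((h₂ t ht).trans (le_abs_self c₂))
    calc _ = |poissonSolIncr a β S t| * innerWeightIncr a S t ^ 2 / (n * σ) ^ 3 := by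
          rw [poissonSol_swapElem hsymm hdiag β hx (mem_compl.1 hy),
            innerWeight_swapElem hsymm hdiag hx (mem_compl.1 hy), ← sub_div, ← sub_div,
            add_sub_cancel_left, add_sub_cancel_left, abs_div,
            abs_of_pos (by positivity : 0 < n * σ)]
          ring
      _ ≤ _ := by
          gcongr
          exact h₁ t ht
  calc _ ≤ n ^ 2 * (c₁ * c₂ ^ 2 / (n * σ) ^ 3) / (2 * (2 * (n - 1))) := by
        rw [cubicVariation]
        have : 0 < n - 1 := by linarith
        gcongr
        exact sum_swaps_le (by positivity) hterm
    _ ≤ n ^ 2 * (c₁ * c₂ ^ 2 / (n * σ) ^ 3) / (2 * n) := by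
        gcongr
        linarith
    _ = _ := by field_simp

theorem abs_Pru_innerWeight_le_sub_stdGaussian_le (hsymm : ∀ u v, a u v = a v u)
    (hdiag : ∀ v, a v v = 0) (hsum : ∑ u, ∑ v, a u v = 0) (ha : ∀ u v, |a u v| ≤ 1)
    (hV : 2 ≤ Fintype.card V) {k : ℕ} (hk : 1 ≤ k) (hkV : k ≤ Fintype.card V)
    {β κ L s Δ : ℝ} (hβ : β * Fintype.card V = k - 1) (hσ : 0 < σ) (hκ : 0 ≤ κ) (hL : 0 ≤ L)
    (hΔ : 0 < Δ) (hΔ1 : Δ ≤ 1) {Bad : Finset V → Prop}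
    (hBad : Pru (univ.powersetCard k) Bad ≤ s)
    (hvar : ∀ S ∈ univ.powersetCard k, ¬Bad S → |swapVariance a β S - σ ^ 2| ≤ κ)
    (hincr : ∀ S ∈ univ.powersetCard k, ¬Bad S → ∀ t ∈ S ×ˢ Sᶜ,
      |innerWeightIncr a S t| ≤ L ∧ |poissonSolIncr a β S t| ≤ L) (z : ℝ) :
    |Pru (univ.powersetCard k) (fun S ↦ innerWeight a S / (Fintype.card V * σ) ≤ z) -
        (gaussianReal 0 1).real (Set.Iic z)| ≤
      Δ + ((2 * (κ / σ ^ 2) + 5 / Δ * (L ^ 3 / (2 * (Fintype.card V : ℝ) ^ 2 * σ ^ 3))) +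
        s * (2 * (1 + 4 * Fintype.card V / σ ^ 2) +
          5 / Δ * (8 * Fintype.card V / σ ^ 3))) := by
  have hV' : (2 : ℝ) ≤ Fintype.card V := by exact_mod_cast hV
  have hc : 0 < 2 * ((Fintype.card V : ℝ) - 1) := by linarith
  have hk' : (1 : ℝ) ≤ k := by exact_mod_cast hk
  have hβ1 : |β| ≤ 1 := by
    have hkV' : (k : ℝ) ≤ Fintype.card V := by exact_mod_cast hkV
    rw [eq_div_of_mul_eq (by positivity) hβ,
      abs_of_nonneg (div_nonneg (sub_nonneg.2 hk') (Nat.cast_nonneg _)), div_le_one (by positivity)]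
    linarith
  refine ((isReversibleOn_swapElem k).abs_Pru_le_sub_stdGaussian_le
    (ψ := fun S ↦ poissonSol a β S / (Fintype.card V * σ)) (powersetCard_nonempty.2 hkV) hc
    (fun S hS ↦ ?_) hΔ hΔ1 z).trans ?_
  · simp only [← sub_div]
    rw [← sum_div, sum_poissonSol_swapElem_sub hsymm hdiag hsum
      ((mem_powersetCard_univ.1 hS).symm ▸ hβ), mul_div_assoc]
  rw [← Exu_const_mul, ← Exu_const_mul, ← Exu_add]
  gcongr
  refine Exu_le_add_Pru_mul (by positivity) (by positivity) (fun S hS hgood ↦ ?_)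
    (fun S _ ↦ ?_) hBad
  · rw [carreDuChamp_swapElem hsymm hdiag]
    have hcubic := cubicVariation_swapElem_le hsymm hdiag hV hσ hL
      (fun t ht ↦ (hincr S hS hgood t ht).2) fun t ht ↦ (hincr S hS hgood t ht).1
    gcongr
    · rw [one_sub_div (by positivity), abs_div, abs_sub_comm,
        abs_of_pos (by positivity : 0 < σ ^ 2)]
      gcongr
      exact hvar S hS hgood
    · exact hcubic.trans_eq (by ring)
  · rw [carreDuChamp_swapElem hsymm hdiag]
    have hcubic := cubicVariation_swapElem_le hsymm hdiag hV hσ (by positivity)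
      (fun t _ ↦ abs_poissonSolIncr_le ha hβ1 S t) fun t _ ↦ abs_innerWeightIncr_le ha S t
    gcongr
    · refine (abs_sub _ _).trans ?_
      rw [abs_one, abs_div, abs_of_pos (by positivity : 0 < σ ^ 2)]
      gcongr
      exact abs_swapVariance_le hV ha hβ1 S
    · refine hcubic.trans_eq ?_
      field_simp
      ring

end NormalApproximation

end SwapChain

/-! ### Swap increments as linear forms in the edge indicators -/

section CentredAdjacency

variable {n : ℕ} {p β : ℝ} {G : Finset (Sym2 (Fin n))} {S : Finset (Fin n)}

/-- The adjacency matrix of `G` with `p` subtracted from its off-diagonal entries. -/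
def centredAdj (p : ℝ) (G : Finset (Sym2 (Fin n))) (u v : Fin n) : ℝ :=
  if u = v then 0 else (if s(u, v) ∈ G then 1 else 0) - p

lemma centredAdj_comm (p : ℝ) (G : Finset (Sym2 (Fin n))) (u v : Fin n) :
    centredAdj p G u v = centredAdj p G v u := by
  simp only [centredAdj, Sym2.eq_swap (a := u), eq_comm (a := u)]

lemma centredAdj_self (p : ℝ) (G : Finset (Sym2 (Fin n))) (v : Fin n) : centredAdj p G v v = 0 :=
  if_pos rfl

lemma abs_centredAdj_le (hp : p ∈ Set.Icc 0 1) (G : Finset (Sym2 (Fin n))) (u v : Fin n) :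
    |centredAdj p G u v| ≤ 1 := by
  obtain ⟨h0, h1⟩ := hp
  rw [centredAdj, abs_le]
  split_ifs <;> constructor <;> linarith

/-- The indicator of the edges joining `v` to a vertex of `U`. -/
def starIndicator (v : Fin n) (U : Finset (Fin n)) (e : Sym2 (Fin n)) : ℝ :=
  if ∃ u ∈ U, u ≠ v ∧ e = s(v, u) then 1 else 0

lemma mem_completeEdges {e : Sym2 (Fin n)} : e ∈ completeEdges n ↔ ¬e.IsDiag := by
  simp [completeEdges]

lemma starIndicator_nonneg (v : Fin n) (U : Finset (Fin n)) (e : Sym2 (Fin n)) :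
    0 ≤ starIndicator v U e := by
  rw [starIndicator]
  split_ifs <;> simp

lemma starIndicator_le_one (v : Fin n) (U : Finset (Fin n)) (e : Sym2 (Fin n)) :
    starIndicator v U e ≤ 1 := by
  rw [starIndicator]
  split_ifs <;> simp

lemma starIndicator_mono (v : Fin n) {U U' : Finset (Fin n)} (h : U ⊆ U') (e : Sym2 (Fin n)) :
    starIndicator v U e ≤ starIndicator v U' e := by
  rw [starIndicator, starIndicator]
  split_ifs with hU hU'
  · exact le_rfl
  · exact absurd (hU.imp fun u hu ↦ ⟨h hu.1, hu.2⟩) hU'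
  all_goals simp

lemma sum_starIndicator_mul (v : Fin n) (U : Finset (Fin n)) (g : Sym2 (Fin n) → ℝ) :
    ∑ e ∈ completeEdges n, starIndicator v U e * g e = ∑ u ∈ U.erase v, g s(v, u) := by
  have hstar : (completeEdges n).filter (fun e ↦ ∃ u ∈ U, u ≠ v ∧ e = s(v, u)) =
      (U.erase v).image (fun u ↦ s(v, u)) := by
    ext e
    simp only [mem_filter, mem_completeEdges, mem_image, mem_erase]
    constructor
    · rintro ⟨-, u, hu, huv, rfl⟩
      exact ⟨u, ⟨huv, hu⟩, rfl⟩
    · rintro ⟨u, ⟨huv, hu⟩, rfl⟩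
      exact ⟨fun h ↦ huv (Sym2.mk_isDiag_iff.1 h).symm, u, hu, huv, rfl⟩
  simp only [starIndicator, ite_mul, one_mul, zero_mul]
  rw [← sum_filter, hstar, sum_image fun _ _ _ _ ↦ Sym2.congr_right.1]

lemma linForm_starIndicator (p : ℝ) (G : Finset (Sym2 (Fin n))) (v : Fin n) (U : Finset (Fin n)) :
    linForm p (completeEdges n) (starIndicator v U) G = ∑ u ∈ U, centredAdj p G u v := by
  rw [linForm, sum_starIndicator_mul,
    ← sum_erase (f := fun u ↦ centredAdj p G u v) U (centredAdj_self p G v)]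
  refine sum_congr rfl fun u hu ↦ ?_
  rw [centredAdj, if_neg (ne_of_mem_erase hu), Sym2.eq_swap]

lemma starIndicator_mk {u w : Fin n} (huw : u ≠ w) (v : Fin n) (U : Finset (Fin n)) :
    starIndicator v U s(u, w) =
      (if v = u ∧ w ∈ U then 1 else 0) + (if v = w ∧ u ∈ U then 1 else 0) := by
  have hiff : (∃ x ∈ U, x ≠ v ∧ s(u, w) = s(v, x)) ↔ v = u ∧ w ∈ U ∨ v = w ∧ u ∈ U := by
    simp only [Sym2.eq_iff]
    grind
  rw [starIndicator, if_congr hiff rfl rfl]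
  split_ifs <;> grind

lemma sum_starIndicator_vertices (S : Finset (Fin n)) {e : Sym2 (Fin n)}
    (he : e ∈ completeEdges n) :
    ∑ v ∈ S, starIndicator v S e = if ∀ v ∈ e, v ∈ S then 2 else 0 := by
  induction e using Sym2.ind with | _ u w
  have huw : u ≠ w := by simpa [mem_completeEdges] using he
  simp only [starIndicator_mk huw, sum_add_distrib, ite_and, sum_ite_eq', Sym2.mem_iff,
    forall_eq_or_imp, forall_eq]
  by_cases hu : u ∈ S <;> by_cases hw : w ∈ S <;> simp [hu, hw, one_add_one_eq_two]

lemma sum_starIndicator_univ {e : Sym2 (Fin n)} (he : e ∈ completeEdges n) :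
    ∑ v, starIndicator v univ e = 2 := by
  simp [sum_starIndicator_vertices univ he]

lemma sum_starIndicator (v : Fin n) (U : Finset (Fin n)) :
    ∑ e ∈ completeEdges n, starIndicator v U e = (U.erase v).card := by
  simpa using sum_starIndicator_mul v U fun _ ↦ 1

lemma sum_starIndicator_le (v : Fin n) (U : Finset (Fin n)) :
    ∑ e ∈ completeEdges n, starIndicator v U e ≤ n := by
  rw [sum_starIndicator]
  exact_mod_cast (card_le_univ _).trans_eq (Fintype.card_fin n)

lemma sum_starIndicator_mul_self (v : Fin n) (U U' : Finset (Fin n)) :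
    ∑ e ∈ completeEdges n, starIndicator v U e * starIndicator v U' e =
      ((U ∩ U').erase v).card := by
  have hmk : ∀ u ∈ U.erase v, starIndicator v U' s(v, u) = if u ∈ U' then 1 else 0 :=
    fun u hu ↦ by
      have huv := ne_of_mem_erase hu
      simp [starIndicator_mk huv.symm, huv.symm]
  rw [sum_starIndicator_mul, sum_congr rfl hmk, sum_boole, filter_mem_eq_inter, erase_inter]

lemma sum_starIndicator_mul_of_ne {v v' : Fin n} (hv : v ≠ v') (U U' : Finset (Fin n)) :
    ∑ e ∈ completeEdges n, starIndicator v U e * starIndicator v' U' e =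
      if v' ∈ U ∧ v ∈ U' then 1 else 0 := by
  have hmk : ∀ u ∈ U.erase v, starIndicator v' U' s(v, u) =
      if v' = u then (if v ∈ U' then 1 else 0) else 0 := fun u hu ↦ by
    rw [starIndicator_mk (ne_of_mem_erase hu).symm, if_neg fun h ↦ hv h.1.symm, zero_add, ite_and]
  rw [sum_starIndicator_mul, sum_congr rfl hmk, sum_ite_eq, ite_and]
  simp [hv.symm]

/-- Coefficients of `innerWeightIncr` as a linear form in the edge indicators. -/
def innerWeightIncrCoeff (S : Finset (Fin n)) (t : Fin n × Fin n) (e : Sym2 (Fin n)) : ℝ :=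
  starIndicator t.2 (S.erase t.1) e - starIndicator t.1 S e

/-- Coefficients of `poissonSolIncr` as a linear form in the edge indicators. -/
def poissonSolIncrCoeff (β : ℝ) (S : Finset (Fin n)) (t : Fin n × Fin n) (e : Sym2 (Fin n)) : ℝ :=
  innerWeightIncrCoeff S t e + β * (starIndicator t.2 univ e - starIndicator t.1 univ e)

lemma linForm_innerWeightIncrCoeff (p : ℝ) (G : Finset (Sym2 (Fin n))) (S : Finset (Fin n))
    (t : Fin n × Fin n) :
    linForm p (completeEdges n) (innerWeightIncrCoeff S t) G =
      innerWeightIncr (centredAdj p G) S t := by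
  rw [innerWeightIncr, ← linForm_starIndicator, ← linForm_starIndicator]
  simp only [linForm, innerWeightIncrCoeff, sub_mul, sum_sub_distrib]

lemma linForm_poissonSolIncrCoeff (p β : ℝ) (G : Finset (Sym2 (Fin n))) (S : Finset (Fin n))
    (t : Fin n × Fin n) :
    linForm p (completeEdges n) (poissonSolIncrCoeff β S t) G =
      poissonSolIncr (centredAdj p G) β S t := by
  rw [poissonSolIncr, ← linForm_innerWeightIncrCoeff, ← linForm_starIndicator,
    ← linForm_starIndicator]
  simp only [linForm, poissonSolIncrCoeff, add_mul, mul_assoc, sub_mul, sum_add_distrib,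
    ← mul_sum, sum_sub_distrib]

/-- The number of coordinates of `t` which are endpoints of the edge `e`. -/
def endpointCount (t : Fin n × Fin n) (e : Sym2 (Fin n)) : ℝ :=
  starIndicator t.1 univ e + starIndicator t.2 univ e

lemma endpointCount_nonneg (t : Fin n × Fin n) (e : Sym2 (Fin n)) : 0 ≤ endpointCount t e :=
  add_nonneg (starIndicator_nonneg _ _ _) (starIndicator_nonneg _ _ _)

lemma sum_endpointCount_le (t : Fin n × Fin n) :
    ∑ e ∈ completeEdges n, endpointCount t e ≤ 2 * n := by
  simp only [endpointCount, sum_add_distrib]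
  linarith [sum_starIndicator_le t.1 univ, sum_starIndicator_le t.2 univ]

lemma sum_swaps_endpointCount_le (S : Finset (Fin n)) {e : Sym2 (Fin n)}
    (he : e ∈ completeEdges n) : ∑ t ∈ S ×ˢ Sᶜ, endpointCount t e ≤ 4 * n :=
  calc ∑ t ∈ S ×ˢ Sᶜ, endpointCount t e ≤ ∑ t ∈ univ ×ˢ univ, endpointCount t e :=
        sum_le_sum_of_subset_of_nonneg (product_subset_product (subset_univ _) (subset_univ _))
          fun t _ _ ↦ endpointCount_nonneg t e
    _ = 4 * n := by
        simp only [endpointCount, sum_product, sum_add_distrib, sum_const, card_univ,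
          Fintype.card_fin, nsmul_eq_mul, ← mul_sum, sum_starIndicator_univ he]
        ring

lemma abs_innerWeightIncrCoeff_le (S : Finset (Fin n)) (t : Fin n × Fin n) (e : Sym2 (Fin n)) :
    |innerWeightIncrCoeff S t e| ≤ endpointCount t e := by
  rw [innerWeightIncrCoeff, endpointCount, abs_le]
  constructor <;> linarith [starIndicator_mono t.2 (subset_univ (S.erase t.1)) e,
    starIndicator_mono t.1 (subset_univ S) e, starIndicator_nonneg t.2 (S.erase t.1) e,
    starIndicator_nonneg t.1 S e, starIndicator_nonneg t.2 univ e, starIndicator_nonneg t.1 univ e]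

lemma abs_poissonSolIncrCoeff_le (hβ : |β| ≤ 1) (S : Finset (Fin n)) (t : Fin n × Fin n)
    (e : Sym2 (Fin n)) : |poissonSolIncrCoeff β S t e| ≤ 2 * endpointCount t e := by
  have hdiff : |starIndicator t.2 univ e - starIndicator t.1 univ e| ≤ endpointCount t e := by
    rw [endpointCount, abs_le]
    constructor <;> linarith [starIndicator_nonneg t.2 univ e, starIndicator_nonneg t.1 univ e]
  calc |poissonSolIncrCoeff β S t e|
      ≤ |innerWeightIncrCoeff S t e| +
          |β| * |starIndicator t.2 univ e - starIndicator t.1 univ e| := by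
        rw [← abs_mul]
        exact abs_add_le _ _
    _ ≤ endpointCount t e + 1 * endpointCount t e := by
        gcongr
        exact abs_innerWeightIncrCoeff_le S t e
    _ = _ := by ring

lemma sum_abs_le_of_le_endpointCount {t : Fin n × Fin n} {c : Sym2 (Fin n) → ℝ}
    (hc : ∀ e, |c e| ≤ 2 * endpointCount t e) : ∑ e ∈ completeEdges n, |c e| ≤ 4 * n := by
  refine (sum_le_sum fun e _ ↦ hc e).trans ?_
  rw [← mul_sum]
  linarith [sum_endpointCount_le t]

lemma sum_sq_le_of_le_endpointCount {t : Fin n × Fin n} {c : Sym2 (Fin n) → ℝ}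
    (hc : ∀ e, |c e| ≤ 2 * endpointCount t e) : ∑ e ∈ completeEdges n, c e ^ 2 ≤ 16 * n := by
  have hle (e : Sym2 (Fin n)) : |c e| ≤ 4 := by
    have := starIndicator_le_one t.1 univ e
    have := starIndicator_le_one t.2 univ e
    exact (hc e).trans (by rw [endpointCount]; linarith)
  calc ∑ e ∈ completeEdges n, c e ^ 2 ≤ ∑ e ∈ completeEdges n, 4 * |c e| :=
        sum_le_sum fun e _ ↦ by
          rw [← sq_abs, sq]
          exact mul_le_mul_of_nonneg_right (hle e) (abs_nonneg _)
    _ ≤ 16 * n := by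
        rw [← mul_sum]
        linarith [sum_abs_le_of_le_endpointCount hc]

lemma sum_poissonSolIncrCoeff_mul_innerWeightIncrCoeff (β : ℝ) {x y : Fin n} (hx : x ∈ S)
    (hy : y ∉ S) :
    ∑ e ∈ completeEdges n, poissonSolIncrCoeff β S (x, y) e * innerWeightIncrCoeff S (x, y) e =
      2 * ((S.card : ℝ) - 1) * (1 + β) := by
  have hyx : y ≠ x := fun h ↦ hy (h ▸ hx)
  have hcard : ((S.erase x).card : ℝ) = S.card - 1 := by
    rw [← card_erase_add_one hx]
    simp
  have hyerase : (S.erase x).erase y = S.erase x :=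
    erase_eq_of_notMem fun h ↦ hy (mem_of_mem_erase h)
  have hexpand (e : Sym2 (Fin n)) :
      poissonSolIncrCoeff β S (x, y) e * innerWeightIncrCoeff S (x, y) e =
        starIndicator y (S.erase x) e * starIndicator y (S.erase x) e -
            2 * (starIndicator y (S.erase x) e * starIndicator x S e) +
          starIndicator x S e * starIndicator x S e +
        β * (starIndicator y univ e * starIndicator y (S.erase x) e -
            starIndicator y univ e * starIndicator x S e -
            starIndicator x univ e * starIndicator y (S.erase x) e +
          starIndicator x univ e * starIndicator x S e) := by
    simp only [poissonSolIncrCoeff, innerWeightIncrCoeff]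
    ring
  simp only [hexpand, sum_add_distrib, sum_sub_distrib, ← mul_sum, sum_starIndicator_mul_self,
    sum_starIndicator_mul_of_ne hyx, sum_starIndicator_mul_of_ne hyx.symm, inter_self, univ_inter,
    hyerase, hcard, mem_erase, hy, mem_univ, ne_eq, not_true_eq_false, and_false, false_and,
    if_false]
  ring

lemma innerWeight_centredAdj (p : ℝ) (hG : G ⊆ completeEdges n) (S : Finset (Fin n)) :
    innerWeight (centredAdj p G) S = edgesIn G S - Kr S.card * p := by
  classical
  have hcolumn : ∀ v ∈ S, ∑ u ∈ S, centredAdj p G u v =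
      ∑ e ∈ G, starIndicator v S e - p * ((S.card : ℝ) - 1) := fun v hv ↦ by
    rw [← linForm_starIndicator, linForm]
    simp only [mul_sub, sum_sub_distrib, ← sum_mul]
    rw [sum_starIndicator, ← card_erase_add_one hv, ← sum_subset hG fun e _ he ↦ by simp [he],
      sum_congr rfl fun e he ↦ by rw [if_pos he, mul_one]]
    push_cast
    ring
  have hedges : ∑ v ∈ S, ∑ e ∈ G, starIndicator v S e = 2 * edgesIn G S := by
    rw [sum_comm, sum_congr rfl fun e he ↦ sum_starIndicator_vertices S (hG he), ← sum_filter,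
      sum_const, nsmul_eq_mul, mul_comm, edgesIn]
  rw [innerWeight, sum_comm, sum_congr rfl hcolumn, sum_sub_distrib, hedges, sum_const,
    nsmul_eq_mul, Kr]
  ring

lemma sum_centredAdj (hG : G ⊆ completeEdges n) (hp : p * Nr n = G.card) :
    ∑ u, ∑ v, centredAdj p G u v = 0 := by
  have htotal := innerWeight_centredAdj p hG univ
  have huniv : edgesIn G univ = G.card := by simp [edgesIn]
  have hKr : Kr n = Nr n := rfl
  rw [huniv, card_univ, Fintype.card_fin, hKr, mul_comm, hp, sub_self, innerWeight] at htotal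
  linarith

lemma sum_column_centredAdj (p : ℝ) (hG : G ⊆ completeEdges n) (v : Fin n) :
    ∑ u, centredAdj p G u v = dS G univ v - p * ((n : ℝ) - 1) := by
  classical
  have hdegree : ∑ u ∈ univ.erase v, (if s(v, u) ∈ G then (1 : ℝ) else 0) = dS G univ v := by
    have hloop : s(v, v) ∉ G := fun h ↦ mem_completeEdges.1 (hG h) (Sym2.mk_isDiag_iff.2 rfl)
    rw [sum_boole, dS, filter_erase, erase_eq_of_notMem (by simp [hloop])]
  rw [← linForm_starIndicator, linForm, sum_starIndicator_mul, sum_sub_distrib, hdegree, sum_const,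
    card_erase_of_mem (mem_univ v), card_univ, Fintype.card_fin, nsmul_eq_mul,
    Nat.cast_pred v.pos, mul_comm]

lemma Vdeg_eq_sum_sq (hn : n ≠ 0) (hG : G ⊆ completeEdges n) (hp : p * Nr n = G.card) :
    Vdeg G = ∑ v, (∑ u, centredAdj p G u v) ^ 2 := by
  have hmean : 2 * (G.card : ℝ) / n = p * ((n : ℝ) - 1) := by
    rw [← hp, Nr]
    field_simp
  have hdegree (v : Fin n) : (dS G univ v : ℝ) = ∑ u, centredAdj p G u v + p * ((n : ℝ) - 1) := by
    rw [sum_column_centredAdj p hG, sub_add_cancel]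
  have hsum := sum_centredAdj hG hp
  rw [sum_comm] at hsum
  simp only [Vdeg, hmean, hdegree, add_sq, sum_add_distrib, sum_const, card_univ, Fintype.card_fin,
    nsmul_eq_mul, ← sum_mul, ← mul_sum, hsum]
  ring

end CentredAdjacency

/-! ### Regularity of the random graph -/

section Regularity

variable {n : ℕ} {p : ℝ} {ℓ : ℝ}

/-- The expectation of `swapVariance (centredAdj p G) ((k - 1) / n) S` over `G(n, p)`, for a fixed
set `S` of `k` vertices. -/
def expectedSwapVariance (n k p : ℝ) : ℝ :=
  p * (1 - p) * (k * (n - k) * (k - 1) * (n + k - 1)) / (2 * (n - 1) * n ^ 3)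

/-- The event that some swap at `S` changes the inner weight or the Poisson solution by at least
`ℓ √n`, or that `swapVariance` deviates from its expectation by at least `ℓ² / √n`. -/
def HasIrregularSwaps (p : ℝ) (k : ℕ) (ℓ : ℝ) (G : Finset (Sym2 (Fin n))) (S : Finset (Fin n)) :
    Prop :=
  (∃ t ∈ S ×ˢ Sᶜ, ℓ * √n ≤ |poissonSolIncr (centredAdj p G) (((k : ℝ) - 1) / n) S t| ∨
    ℓ * √n ≤ |innerWeightIncr (centredAdj p G) S t|) ∨
  ℓ ^ 2 / √n ≤
    |swapVariance (centredAdj p G) (((k : ℝ) - 1) / n) S - expectedSwapVariance n k p|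

lemma Nr_pos (hn : 2 ≤ n) : 0 < Nr n := by
  have : (2 : ℝ) ≤ n := by exact_mod_cast hn
  rw [Nr]
  nlinarith

lemma Nr_add_one_le (hn : 2 ≤ n) : Nr n + 1 ≤ (n : ℝ) ^ 2 := by
  have : (2 : ℝ) ≤ n := by exact_mod_cast hn
  rw [Nr]
  nlinarith

lemma two_mul_Nr_le (n : ℕ) : 2 * Nr n ≤ (n : ℝ) ^ 2 := by
  rw [Nr]
  nlinarith [(Nat.cast_nonneg n : (0 : ℝ) ≤ n)]

lemma exp_truncation_le (hn : n ≠ 0) (ℓ : ℝ) :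
    Real.exp (-((ℓ * √n) ^ 2 / (4 * (16 * n)))) ≤ Real.exp (-(ℓ ^ 2 / 288)) := by
  have hn' : (0 : ℝ) < n := by positivity
  rw [Real.exp_le_exp, neg_le_neg_iff, mul_pow, Real.sq_sqrt hn'.le,
    div_le_div_iff₀ (by norm_num) (by positivity)]
  nlinarith [mul_nonneg (sq_nonneg ℓ) hn'.le]

/-- The constant `288` is `4 * 12 ^ 2 / 2`, where the `2` comes from `2 N ≤ n ^ 2`. -/
lemma exp_boundedDifferences_le (hn : 2 ≤ n) (hℓ : 0 < ℓ) {m : ℝ} (hm : 0 < m) :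
    Real.exp (-((ℓ ^ 2 * n * √n * m) ^ 2 / (4 * (Nr n * (ℓ * √n * (12 * m)) ^ 2)))) ≤
      Real.exp (-(ℓ ^ 2 / 288)) := by
  have hN := Nr_pos hn
  have : (0 : ℝ) < √n := Real.sqrt_pos.2 (by positivity)
  rw [Real.exp_le_exp, neg_le_neg_iff, div_le_div_iff₀ (by norm_num) (by positivity)]
  calc _ = 288 * ℓ ^ 4 * √n ^ 2 * m ^ 2 * (2 * Nr n) := by ring
    _ ≤ 288 * ℓ ^ 4 * √n ^ 2 * m ^ 2 * (n : ℝ) ^ 2 := by gcongr; exact two_mul_Nr_le n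
    _ = _ := by ring

lemma bernoulliPr_completeEdges_existsLargeLinForm_or_quadForm_le {κ : Type*}
    (hp : p ∈ Set.Icc 0 1) (hn : 2 ≤ n) (hℓ : 1 ≤ ℓ)
    (hexp : 128 * (n : ℝ) ^ 4 * Real.exp (-(ℓ ^ 2 / 288)) ≤ 1) {I : Finset κ}
    {α β : κ → Sym2 (Fin n) → ℝ} {m : ℝ} (hm : 1 ≤ m) (hmn : m ≤ n) (hcard : I.card ≤ n * m)
    (hα : ∀ i ∈ I, ∑ e ∈ completeEdges n, α i e ^ 2 ≤ 16 * n)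
    (hβ : ∀ i ∈ I, ∑ e ∈ completeEdges n, β i e ^ 2 ≤ 16 * n)
    (hαB : ∀ i ∈ I, ∑ e ∈ completeEdges n, |α i e| ≤ 4 * n)
    (hβB : ∀ i ∈ I, ∑ e ∈ completeEdges n, |β i e| ≤ 4 * n)
    (hI : ∀ e ∈ completeEdges n, ∑ i ∈ I, (|α i e| + |β i e|) ≤ 12 * m) :
    bernoulliPr p (completeEdges n) (fun G ↦
      ExistsLargeLinForm p (completeEdges n) I α β (ℓ * √n) G ∨
      2 * (ℓ ^ 2 * n * √n * m) ≤
        |∑ i ∈ I, linForm p (completeEdges n) (α i) G * linForm p (completeEdges n) (β i) G -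
          p * (1 - p) * ∑ i ∈ I, ∑ e ∈ completeEdges n, α i e * β i e|) ≤
      6 * (n : ℝ) ^ 2 * Real.exp (-(ℓ ^ 2 / 288)) := by
  have hn' : (2 : ℝ) ≤ n := by exact_mod_cast hn
  have hn1 : 1 ≤ √(n : ℝ) := Real.one_le_sqrt.2 (by linarith)
  set t := ℓ ^ 2 * n * √n * m
  set r := Real.exp (-(ℓ ^ 2 / 288))
  have hr0 : 0 < r := Real.exp_pos _
  have hE : (completeEdges n).Nonempty :=
    card_pos.1 (by rw [card_completeEdges]; exact Nat.choose_pos hn)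
  have htrunc : Real.exp (-((ℓ * √n) ^ 2 / (4 * (16 * n)))) ≤ r :=
    exp_truncation_le (by omega) ℓ
  have hdiff := exp_boundedDifferences_le hn (by positivity : 0 < ℓ) (by positivity : 0 < m)
  have hthreshold : t + I.card *
      (8 * (4 * n) ^ 2 * Real.exp (-((ℓ * √n) ^ 2 / (4 * (16 * n))))) ≤ 2 * t :=
    calc _ ≤ t + n * m * (8 * (4 * n) ^ 2 * r) := by gcongr
      _ = t + m * (128 * (n : ℝ) ^ 3 * r) := by ring
      _ ≤ t + m * 1 := by
        gcongr
        exact le_trans (by gcongr <;> linarith) hexp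
      _ ≤ t + ℓ ^ 2 * n * √n * m := by
        rw [mul_one]
        gcongr
        exact le_mul_of_one_le_left (by linarith) (one_le_mul_of_one_le_of_one_le
          (one_le_mul_of_one_le_of_one_le (one_le_pow₀ hℓ) (by linarith)) hn1)
      _ = 2 * t := by ring
  have htail := bernoulliPr_existsLargeLinForm_or_quadForm_le hp hE (by positivity)
    (by positivity : 0 < 12 * m) (by positivity : 0 < ℓ * √n) (by positivity : 0 ≤ t) hα hβ hαB hβB
    hI
  rw [cast_card_completeEdges] at htail
  calc _ ≤ n * m * (4 * r) + 2 * r := (bernoulliPr_mono hp fun G _ ↦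
        Or.imp_right hthreshold.trans).trans (htail.trans (by gcongr))
    _ ≤ n * n * (4 * r) + 2 * (n * n * r) := by
        gcongr
        exact le_mul_of_one_le_left hr0.le (by nlinarith)
    _ = _ := by ring

lemma sum_swaps_sum_poissonSolIncrCoeff_mul_innerWeightIncrCoeff (β : ℝ) (S : Finset (Fin n)) :
    ∑ t ∈ S ×ˢ Sᶜ, ∑ e ∈ completeEdges n,
      poissonSolIncrCoeff β S t e * innerWeightIncrCoeff S t e =
        S.card * (n - S.card) * (2 * ((S.card : ℝ) - 1) * (1 + β)) := by
  have hcard : (Sᶜ.card : ℝ) = n - S.card := by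
    rw [card_compl, Nat.cast_sub (card_le_univ S), Fintype.card_fin]
  rw [sum_product, sum_congr rfl fun x hx ↦ sum_congr rfl fun y hy ↦
    sum_poissonSolIncrCoeff_mul_innerWeightIncrCoeff β hx (mem_compl.1 hy)]
  simp only [sum_const, nsmul_eq_mul, hcard]
  ring

lemma le_abs_sum_of_le_abs_swapVariance_sub (hn : 2 ≤ n) {a : Fin n → Fin n → ℝ} {k : ℝ}
    {S : Finset (Fin n)}
    (hdev : ℓ ^ 2 / √n ≤ |swapVariance a ((k - 1) / n) S - expectedSwapVariance n k p|) :
    2 * (ℓ ^ 2 * n * √n * n) ≤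
      |∑ t ∈ S ×ˢ Sᶜ, poissonSolIncr a ((k - 1) / n) S t * innerWeightIncr a S t -
        p * (1 - p) * (k * (n - k) * (2 * (k - 1) * (1 + (k - 1) / n)))| := by
  have hn' : (2 : ℝ) ≤ n := by exact_mod_cast hn
  have hsqrt : 0 < √(n : ℝ) := Real.sqrt_pos.2 (by linarith)
  have hpred : 0 < (n : ℝ) - 1 := by linarith
  have heq : swapVariance a ((k - 1) / n) S - expectedSwapVariance n k p =
      (∑ t ∈ S ×ˢ Sᶜ, poissonSolIncr a ((k - 1) / n) S t * innerWeightIncr a S t -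
        p * (1 - p) * (k * (n - k) * (2 * (k - 1) * (1 + (k - 1) / n)))) /
          (4 * ((n : ℝ) - 1) * n ^ 2) := by
    rw [swapVariance, expectedSwapVariance, sub_div, Fintype.card_fin]
    field_simp
    ring
  rw [heq, abs_div, abs_of_pos (by positivity : 0 < 4 * ((n : ℝ) - 1) * n ^ 2),
    le_div_iff₀ (by positivity)] at hdev
  refine le_trans ?_ hdev
  calc 2 * (ℓ ^ 2 * n * √n * n) = ℓ ^ 2 / √n * (2 * √n ^ 2 * n ^ 2) := by field_simp
    _ = ℓ ^ 2 / √n * (2 * n * n ^ 2) := by rw [Real.sq_sqrt (by linarith)]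
    _ ≤ ℓ ^ 2 / √n * (4 * ((n : ℝ) - 1) * n ^ 2) := by
        gcongr ℓ ^ 2 / √n * (?_ * n ^ 2)
        linarith

lemma bernoulliPr_hasIrregularSwaps_le (hp : p ∈ Set.Icc 0 1) (hn : 2 ≤ n) (hℓ : 1 ≤ ℓ)
    (hexp : 128 * (n : ℝ) ^ 4 * Real.exp (-(ℓ ^ 2 / 288)) ≤ 1) {k : ℕ} (hk : 1 ≤ k) (hkn : k ≤ n)
    {S : Finset (Fin n)} (hS : S.card = k) :
    bernoulliPr p (completeEdges n) (fun G ↦ HasIrregularSwaps p k ℓ G S) ≤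
      6 * (n : ℝ) ^ 2 * Real.exp (-(ℓ ^ 2 / 288)) := by
  have hn' : (2 : ℝ) ≤ n := by exact_mod_cast hn
  have hk' : (1 : ℝ) ≤ k := by exact_mod_cast hk
  have hkn' : (k : ℝ) ≤ n := by exact_mod_cast hkn
  set β := ((k : ℝ) - 1) / n
  have hβ : |β| ≤ 1 := by
    rw [abs_of_nonneg (div_nonneg (by linarith) (by linarith)), div_le_one (by linarith)]
    linarith
  have hinner (t : Fin n × Fin n) (e : Sym2 (Fin n)) :
      |innerWeightIncrCoeff S t e| ≤ 2 * endpointCount t e := by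
    linarith [abs_innerWeightIncrCoeff_le S t e, endpointCount_nonneg t e]
  have hpoisson := abs_poissonSolIncrCoeff_le hβ S
  refine (bernoulliPr_mono hp fun G _ ↦ Or.imp ?_ fun hvar ↦ ?_).trans
    (bernoulliPr_completeEdges_existsLargeLinForm_or_quadForm_le hp hn hℓ hexp
      (I := S ×ˢ Sᶜ) (α := poissonSolIncrCoeff β S) (β := innerWeightIncrCoeff S) (m := n)
      (by linarith) le_rfl ?_ (fun t _ ↦ sum_sq_le_of_le_endpointCount (hpoisson t))
      (fun t _ ↦ sum_sq_le_of_le_endpointCount (hinner t))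
      (fun t _ ↦ sum_abs_le_of_le_endpointCount (hpoisson t))
      (fun t _ ↦ sum_abs_le_of_le_endpointCount (hinner t)) fun e he ↦ ?_)
  · simp only [ExistsLargeLinForm, linForm_poissonSolIncrCoeff, linForm_innerWeightIncrCoeff]
    exact id
  · simp only [linForm_poissonSolIncrCoeff, linForm_innerWeightIncrCoeff,
      sum_swaps_sum_poissonSolIncrCoeff_mul_innerWeightIncrCoeff, hS]
    exact le_abs_sum_of_le_abs_swapVariance_sub hn hvar
  · rw [← sq]
    simpa using sum_swaps_le (S := S) zero_le_one fun _ _ ↦ le_refl (1 : ℝ)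
  · refine (sum_le_sum fun t _ ↦
      add_le_add (hpoisson t e) (abs_innerWeightIncrCoeff_le S t e)).trans ?_
    rw [sum_add_distrib, ← mul_sum]
    linarith [sum_swaps_endpointCount_le S he]

lemma bernoulliPr_le_abs_sum_sq_sub_le (hp : p ∈ Set.Icc 0 1) (hn : 2 ≤ n) (hℓ : 1 ≤ ℓ)
    (hexp : 128 * (n : ℝ) ^ 4 * Real.exp (-(ℓ ^ 2 / 288)) ≤ 1) :
    bernoulliPr p (completeEdges n) (fun G ↦ 2 * (ℓ ^ 2 * n * √n) ≤
      |∑ v, (∑ u, centredAdj p G u v) ^ 2 - p * (1 - p) * (n * ((n : ℝ) - 1))|) ≤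
        6 * (n : ℝ) ^ 2 * Real.exp (-(ℓ ^ 2 / 288)) := by
  have hn' : (2 : ℝ) ≤ n := by exact_mod_cast hn
  have hinner (v : Fin n) :
      ∑ e ∈ completeEdges n, starIndicator v univ e * starIndicator v univ e = (n : ℝ) - 1 := by
    rw [sum_starIndicator_mul_self, inter_self, card_erase_of_mem (mem_univ v), card_univ,
      Fintype.card_fin, Nat.cast_pred v.pos]
  have habs (v : Fin n) (e : Sym2 (Fin n)) : |starIndicator v univ e| = starIndicator v univ e :=
    abs_of_nonneg (starIndicator_nonneg v univ e)
  have hsq (v : Fin n) : ∑ e ∈ completeEdges n, starIndicator v univ e ^ 2 ≤ 16 * n := by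
    simp only [sq, hinner]
    linarith
  have hsum (v : Fin n) : ∑ e ∈ completeEdges n, |starIndicator v univ e| ≤ 4 * n := by
    simp only [habs]
    linarith [sum_starIndicator_le v univ]
  refine (bernoulliPr_mono hp fun G _ hdev ↦ Or.inr ?_).trans
    (bernoulliPr_completeEdges_existsLargeLinForm_or_quadForm_le hp hn hℓ hexp
      (I := univ) (α := fun v ↦ starIndicator v univ) (β := fun v ↦ starIndicator v univ)
      le_rfl (by linarith) (by simp) (fun v _ ↦ hsq v) (fun v _ ↦ hsq v) (fun v _ ↦ hsum v)
      (fun v _ ↦ hsum v) fun e he ↦ ?_)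
  · simpa only [mul_one, linForm_starIndicator, hinner, sum_const, card_univ, Fintype.card_fin,
      nsmul_eq_mul, ← sq (∑ u, centredAdj p G u _)] using hdev
  · simp only [habs, sum_add_distrib, sum_starIndicator_univ he]
    norm_num

lemma mem_Icc_of_mul_Nr_eq (hn : 2 ≤ n) {M : ℕ} (hM : M < (completeEdges n).card)
    (hp : p * Nr n = M) : p ∈ Set.Icc 0 1 := by
  have hM' : (M : ℝ) ≤ Nr n := by
    rw [← cast_card_completeEdges]
    exact_mod_cast hM.le
  rw [eq_div_of_mul_eq (Nr_pos hn).ne' hp]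
  exact ⟨div_nonneg M.cast_nonneg (Nr_pos hn).le, div_le_one_of_le₀ hM' (Nr_pos hn).le⟩

lemma Pru_graphsM_le_bernoulliPr (hn : 2 ≤ n) {M : ℕ} (hM : M < (completeEdges n).card)
    (hp : p * Nr n = M) (P : Finset (Sym2 (Fin n)) → Prop) :
    Pru (graphsM n M) P ≤ (n : ℝ) ^ 2 * bernoulliPr p (completeEdges n) P := by
  have htransfer := Pru_powersetCard_le hM P
  rw [← graphsM_eq_powersetCard, cast_card_completeEdges,
    ← eq_div_of_mul_eq (Nr_pos hn).ne' hp] at htransfer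
  exact htransfer.trans (mul_le_mul_of_nonneg_right (Nr_add_one_le hn)
    (bernoulliPr_nonneg (mem_Icc_of_mul_Nr_eq hn hM hp) _))

lemma Pru_graphsM_le_abs_Vdeg_sub_le (hn : 2 ≤ n) {M : ℕ} (hM : M < (completeEdges n).card)
    (hp : p * Nr n = M) (hℓ : 1 ≤ ℓ)
    (hexp : 128 * (n : ℝ) ^ 4 * Real.exp (-(ℓ ^ 2 / 288)) ≤ 1) :
    Pru (graphsM n M) (fun G ↦ 2 * (ℓ ^ 2 * n * √n) ≤
      |Vdeg G - p * (1 - p) * (n * ((n : ℝ) - 1))|) ≤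
        (n : ℝ) ^ 2 * (6 * (n : ℝ) ^ 2 * Real.exp (-(ℓ ^ 2 / 288))) := by
  refine le_trans (Pru_mono fun G hG hdev ↦ ?_) ((Pru_graphsM_le_bernoulliPr hn hM hp _).trans
    (mul_le_mul_of_nonneg_left (bernoulliPr_le_abs_sum_sq_sub_le
      (mem_Icc_of_mul_Nr_eq hn hM hp) hn hℓ hexp) (by positivity)))
  obtain ⟨hGE, hGM⟩ := mem_powersetCard.1 (graphsM_eq_powersetCard n M ▸ hG)
  rwa [← Vdeg_eq_sum_sq (by omega) hGE (hp.trans (by rw [hGM]))]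

/-- The property of `G` behind the central limit theorem: all but a fraction `1 / n ^ 3` of the
`k`-sets have regular swaps, and the degree statistic `Vdeg G` is close to its expectation over
`G(n, p)`. -/
def IsSwapRegular (p : ℝ) (k : ℕ) (ℓ : ℝ) (G : Finset (Sym2 (Fin n))) : Prop :=
  Pru (kSets n k) (HasIrregularSwaps p k ℓ G) ≤ 1 / (n : ℝ) ^ 3 ∧
    |Vdeg G - p * (1 - p) * (n * ((n : ℝ) - 1))| < 2 * (ℓ ^ 2 * n * √n)

lemma Pru_graphsM_not_isSwapRegular_le (hn : 2 ≤ n) {M k : ℕ} (hM : M < (completeEdges n).card)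
    (hp : p * Nr n = M) (hk : 1 ≤ k) (hkn : k ≤ n) (hℓ : 1 ≤ ℓ)
    (hexp : 128 * (n : ℝ) ^ 7 * Real.exp (-(ℓ ^ 2 / 288)) ≤ Real.exp (-ℓ)) :
    Pru (graphsM n M) (fun G ↦ ¬IsSwapRegular p k ℓ G) ≤ Real.exp (-ℓ) := by
  have hn1 : (1 : ℝ) ≤ n := by exact_mod_cast one_le_two.trans hn
  set r := Real.exp (-(ℓ ^ 2 / 288))
  have hr0 : 0 < r := Real.exp_pos _
  have hpow : (n : ℝ) ^ 4 * r ≤ (n : ℝ) ^ 7 * r := by gcongr; norm_num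
  have hexp' : 128 * (n : ℝ) ^ 4 * r ≤ 1 := by
    have : Real.exp (-ℓ) ≤ 1 := Real.exp_le_one_iff.2 (by linarith)
    linarith
  have hswaps : Pru (graphsM n M) (fun G ↦ 1 / (n : ℝ) ^ 3 <
      Pru (kSets n k) (HasIrregularSwaps p k ℓ G)) ≤ 6 * (n : ℝ) ^ 7 * r := by
    refine Pru_lt_Pru_le (by positivity) (by positivity) fun S hS ↦ ?_
    calc _ ≤ (n : ℝ) ^ 2 * (6 * (n : ℝ) ^ 2 * r) :=
          (Pru_graphsM_le_bernoulliPr hn hM hp _).trans (mul_le_mul_of_nonneg_left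
            (bernoulliPr_hasIrregularSwaps_le (mem_Icc_of_mul_Nr_eq hn hM hp) hn hℓ hexp' hk hkn
              (mem_powersetCard.1 hS).2) (by positivity))
      _ = 1 / (n : ℝ) ^ 3 * (6 * (n : ℝ) ^ 7 * r) := by field_simp
  have hdegrees := Pru_graphsM_le_abs_Vdeg_sub_le hn hM hp hℓ hexp'
  calc _ ≤ _ := Pru_mono fun G _ hG ↦ by
        rwa [IsSwapRegular, not_and_or, not_le, not_lt] at hG
    _ ≤ 6 * (n : ℝ) ^ 7 * r + (n : ℝ) ^ 2 * (6 * (n : ℝ) ^ 2 * r) :=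
        (Pru_or_le _ _).trans (add_le_add hswaps hdegrees)
    _ ≤ 128 * (n : ℝ) ^ 7 * r := by
        have : 0 < (n : ℝ) ^ 7 * r := by positivity
        linarith
    _ ≤ Real.exp (-ℓ) := hexp

end Regularity

/-! ### The variance `Σ₁₁` -/

section Variance

variable {n k p V : ℝ}

/-- The variance `Σ₁₁` in terms of the edge density `p = M / N` and the degree statistic `V`. -/
def edgeCountVariance (n k p V : ℝ) : ℝ :=
  k * (k - 1) * (n - k) * (n - k - 1) / (2 * n ^ 2 * (n - 2) * (n - 3)) *
    (p * (1 - p) + (k - 2) / (n - k - 1) * V / (n * (n - 1) / 2))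

lemma edgeCountVariance_sub_expectedSwapVariance (hn : 3 < n) (hkn : k + 1 < n) (p V : ℝ) :
    edgeCountVariance n k p V - expectedSwapVariance n k p =
      p * (1 - p) * (k * (k - 1) * (n - k)) * ((n + k) * (4 * n - 6) - 4 * n ^ 2 + 6) /
        (2 * n ^ 2 * ((n - 2) * (n - 3) * ((n - 1) * n))) +
      k * (k - 1) * (n - k) * (k - 2) / (n ^ 2 * ((n - 2) * (n - 3) * ((n - 1) * n))) *
        (V - p * (1 - p) * (n * (n - 1))) := by
  have : n ≠ 0 := by linarith
  have : n - 1 ≠ 0 := by linarith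
  have : n - 2 ≠ 0 := by linarith
  have : n - 3 ≠ 0 := by linarith
  have : n - k - 1 ≠ 0 := by linarith
  rw [edgeCountVariance, expectedSwapVariance]
  field_simp
  ring

lemma abs_edgeCountVariance_sub_expectedSwapVariance_le (hn : 6 ≤ n) (hk : 2 ≤ k)
    (hkn : k + 2 ≤ n) (hp : p ∈ Set.Icc 0 1) {t : ℝ}
    (hV : |V - p * (1 - p) * (n * (n - 1))| ≤ t) :
    |edgeCountVariance n k p V - expectedSwapVariance n k p| ≤ 36 / n + 8 / n ^ 2 * t := by
  have : 0 < n := by linarith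
  have hk1 : 0 ≤ k - 1 := by linarith
  have : 0 ≤ k - 2 := by linarith
  have hnk : 0 ≤ n - k := by linarith
  have hq : 0 ≤ 1 - p := sub_nonneg.2 hp.2
  have hp0 := hp.1
  have hpq : p * (1 - p) ≤ 1 := mul_le_one₀ hp.2 hq (by linarith)
  rw [edgeCountVariance_sub_expectedSwapVariance (by linarith) (by linarith)]
  set D := (n - 2) * (n - 3) * ((n - 1) * n)
  have hD : n ^ 4 / 8 ≤ D :=
    calc n ^ 4 / 8 = n ^ 2 / 4 * (n ^ 2 / 2) := by ring
      _ ≤ D := mul_le_mul (by nlinarith) (by nlinarith) (by positivity) (by nlinarith)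
  have hD0 : 0 < D := lt_of_lt_of_le (by positivity) hD
  have hcubic : k * (k - 1) * (n - k) ≤ n ^ 3 :=
    calc k * (k - 1) * (n - k) ≤ n * n * n := by gcongr <;> linarith
      _ = n ^ 3 := by ring
  have hquadratic : |(n + k) * (4 * n - 6) - 4 * n ^ 2 + 6| ≤ 9 * n ^ 2 := by
    rw [abs_le]
    constructor <;> nlinarith
  refine (abs_add_le _ _).trans (add_le_add ?_ ?_)
  · rw [abs_div, abs_mul, abs_of_nonneg (by positivity : 0 ≤ p * (1 - p) * (k * (k - 1) * (n - k))),
      abs_of_pos (by positivity : 0 < 2 * n ^ 2 * D), div_le_iff₀ (by positivity)]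
    calc _ ≤ 1 * n ^ 3 * (9 * n ^ 2) := by gcongr
      _ = 36 / n * (2 * n ^ 2 * (n ^ 4 / 8)) := by field_simp; norm_num
      _ ≤ _ := by gcongr
  · rw [abs_mul, abs_of_nonneg (by positivity)]
    refine mul_le_mul ?_ hV (abs_nonneg _) (by positivity)
    rw [div_le_iff₀ (by positivity)]
    calc k * (k - 1) * (n - k) * (k - 2) ≤ n ^ 3 * n := by gcongr; linarith
      _ = 8 / n ^ 2 * (n ^ 2 * (n ^ 4 / 8)) := by field_simp
      _ ≤ _ := by gcongr

lemma half_sq_le_mul_sub_one {x y : ℝ} (hx : 2 ≤ x) (hy : 0 ≤ y) (hyx : y ≤ x) :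
    y ^ 2 / 2 ≤ x * (x - 1) := by
  nlinarith

lemma le_edgeCountVariance {δ : ℝ} (hδ : 0 < δ) (hn : 3 < n) (hk : 2 ≤ k) (hkn : k + 2 ≤ n)
    (hp : p ∈ Set.Icc δ (1 - δ)) (hδk : δ * n ≤ k) (hδnk : δ * n ≤ n - k) (hV : 0 ≤ V) :
    δ ^ 6 / 8 ≤ edgeCountVariance n k p V := by
  have h1 : 0 < n - 1 := by linarith
  have h2 : 0 < n - 2 := by linarith
  have : 0 < n - 3 := by linarith
  have : 0 ≤ k - 2 := by linarith
  have hnk : 0 < n - k - 1 := by linarith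
  have hproduct : (δ * n) ^ 4 / 4 ≤ k * (k - 1) * (n - k) * (n - k - 1) :=
    calc (δ * n) ^ 4 / 4 = (δ * n) ^ 2 / 2 * ((δ * n) ^ 2 / 2) := by ring
      _ ≤ k * (k - 1) * ((n - k) * (n - k - 1)) :=
        mul_le_mul (half_sq_le_mul_sub_one hk (by positivity) hδk)
          (half_sq_le_mul_sub_one (by linarith) (by positivity) hδnk) (by positivity)
          (by nlinarith)
      _ = _ := by ring
  have hfactor :
      δ ^ 4 / 8 ≤ k * (k - 1) * (n - k) * (n - k - 1) / (2 * n ^ 2 * (n - 2) * (n - 3)) := by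
    rw [le_div_iff₀ (by positivity)]
    calc δ ^ 4 / 8 * (2 * n ^ 2 * (n - 2) * (n - 3))
        = δ ^ 4 / 4 * n ^ 2 * ((n - 2) * (n - 3)) := by ring
      _ ≤ δ ^ 4 / 4 * n ^ 2 * n ^ 2 := by gcongr; nlinarith
      _ = (δ * n) ^ 4 / 4 := by ring
      _ ≤ _ := hproduct
  have hbracket : δ ^ 2 ≤ p * (1 - p) + (k - 2) / (n - k - 1) * V / (n * (n - 1) / 2) :=
    calc δ ^ 2 = δ * δ := sq δ
      _ ≤ p * (1 - p) := mul_le_mul hp.1 (by linarith [hp.2]) hδ.le (hδ.le.trans hp.1)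
      _ ≤ _ := le_add_of_nonneg_right (by positivity)
  calc δ ^ 6 / 8 = δ ^ 4 / 8 * δ ^ 2 := by ring
    _ ≤ _ := mul_le_mul hfactor hbracket (by positivity) (le_trans (by positivity) hfactor)

lemma edgeCountVariance_eq_mul_add {n k M : ℕ} (hn : 3 < n) (hkn : k ≤ n)
    (hp : p * Nr n = M) (V : ℝ) :
    edgeCountVariance n k p V =
      2 * Kr k * Kr (n - k) / ((n : ℝ) ^ 2 * (Nr n) ^ 2 * ((n : ℝ) - 2) * ((n : ℝ) - 3)) *
        ((M : ℝ) * (Nr n - M) + (((k : ℝ) - 2) / (((n - k : ℕ) : ℝ) - 1)) * Nr n * V) := by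
  have hn' : (3 : ℝ) < n := by exact_mod_cast hn
  have : (n : ℝ) - 2 ≠ 0 := by linarith
  have : (n : ℝ) - 3 ≠ 0 := by linarith
  have : Nr n ≠ 0 := (Nr_pos (by omega)).ne'
  rw [edgeCountVariance, Kr, Kr, Nat.cast_sub hkn, ← hp, ← Nr]
  generalize ((k : ℝ) - 2) / (n - k - 1) = c
  field_simp

end Variance

/-! ### The central limit theorem for `e(S)` -/

section CentralLimit

/-- The constant in the central limit theorem, in terms of a lower bound `s` for the standard
deviation of `W`. -/
def cltConst (s : ℝ) : ℝ := 3 + 114 / s ^ 2 + 43 / s ^ 3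

lemma steinError_le_cltConst_mul {y ℓ s σ : ℝ} (hy : 1 ≤ y) (hℓ : 1 ≤ ℓ) (hs : 0 < s)
    (hσ : s ≤ σ) :
    y⁻¹ + ((2 * (53 * (ℓ ^ 2 / y ^ 2) / σ ^ 2) +
      5 / y⁻¹ * ((ℓ * y ^ 2) ^ 3 / (2 * (y ^ 4) ^ 2 * σ ^ 3))) +
        1 / (y ^ 4) ^ 3 * (2 * (1 + 4 * y ^ 4 / σ ^ 2) + 5 / y⁻¹ * (8 * y ^ 4 / σ ^ 3))) ≤
      cltConst s * (ℓ ^ 4 / y) := by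
  have : 0 < y := by linarith
  have hσ0 : 0 < σ := by linarith
  have hmonomial {a b : ℕ} (ha : a ≤ 4) (hb : 1 ≤ b) : ℓ ^ a / y ^ b ≤ ℓ ^ 4 / y := by
    gcongr
    exact le_self_pow₀ hy (by omega)
  have h01 : 1 / y ≤ ℓ ^ 4 / y := by simpa using hmonomial (a := 0) (b := 1) (by simp) (by simp)
  have h0 {b : ℕ} (hb : 1 ≤ b) : 1 / y ^ b ≤ ℓ ^ 4 / y := by
    simpa using hmonomial (a := 0) (by simp) hb
  have h31 : ℓ ^ 3 / y ≤ ℓ ^ 4 / y := by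
    simpa using hmonomial (a := 3) (b := 1) (by simp) (by simp)
  calc _ = 1 / y + 106 * (ℓ ^ 2 / y ^ 2) / σ ^ 2 + 5 / 2 * (ℓ ^ 3 / y) / σ ^ 3 +
        (2 * (1 / y ^ 12) + 8 * (1 / y ^ 8) / σ ^ 2 + 40 * (1 / y ^ 7) / σ ^ 3) := by
        field_simp
        ring
    _ ≤ ℓ ^ 4 / y + 106 * (ℓ ^ 4 / y) / s ^ 2 + 5 / 2 * (ℓ ^ 4 / y) / s ^ 3 +
        (2 * (ℓ ^ 4 / y) + 8 * (ℓ ^ 4 / y) / s ^ 2 + 40 * (ℓ ^ 4 / y) / s ^ 3) := by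
        gcongr ?_ + 106 * ?_ / ?_ ^ 2 + 5 / 2 * ?_ / ?_ ^ 3 +
          (2 * ?_ + 8 * ?_ / ?_ ^ 2 + 40 * ?_ / ?_ ^ 3)
        exacts [hmonomial (by simp) (by simp), h0 (by simp), h0 (by simp), h0 (by simp)]
    _ = (3 + 114 / s ^ 2 + 42.5 / s ^ 3) * (ℓ ^ 4 / y) := by ring
    _ ≤ cltConst s * (ℓ ^ 4 / y) := by
        rw [cltConst]
        gcongr
        norm_num

variable {n M k : ℕ} {p ℓ δ : ℝ} {G : Finset (Sym2 (Fin n))}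

lemma IsSwapRegular.abs_expectedSwapVariance_sub_le (hG : IsSwapRegular p k ℓ G) (hn : 6 ≤ n)
    (hk : 2 ≤ k) (hkn : k + 2 ≤ n) (hp : p ∈ Set.Icc 0 1) (hℓ : 1 ≤ ℓ) :
    |expectedSwapVariance n k p - edgeCountVariance n k p (Vdeg G)| ≤ 52 * (ℓ ^ 2 / √n) := by
  have hn' : (6 : ℝ) ≤ n := by exact_mod_cast hn
  have hsqrt : 1 ≤ √(n : ℝ) := Real.one_le_sqrt.2 (by linarith)
  have hsq : √(n : ℝ) ^ 2 = n := Real.sq_sqrt (by linarith)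
  rw [abs_sub_comm]
  calc _ ≤ 36 / (n : ℝ) + 8 / (n : ℝ) ^ 2 * (2 * (ℓ ^ 2 * n * √n)) :=
        abs_edgeCountVariance_sub_expectedSwapVariance_le hn' (by exact_mod_cast hk)
          (by exact_mod_cast hkn) hp hG.2.le
    _ = 36 * (1 / √n ^ 2) + 16 * (ℓ ^ 2 / √n) := by
        rw [hsq]
        field_simp
        linear_combination 16 * ℓ ^ 2 * hsq
    _ ≤ 36 * (ℓ ^ 2 / √n) + 16 * (ℓ ^ 2 / √n) := by
        gcongr
        · exact one_le_pow₀ hℓ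
        · exact le_self_pow₀ hsqrt two_ne_zero
    _ = _ := by ring

lemma IsSwapRegular.abs_Pru_innerWeight_div_le_sub_stdGaussian_le (hG : IsSwapRegular p k ℓ G)
    (hGE : G ⊆ completeEdges n) (hpG : p * Nr n = G.card) (hn : 6 ≤ n) (hk : 2 ≤ k)
    (hkn : k + 2 ≤ n) (hp : p ∈ Set.Icc 0 1) (hℓ : 1 ≤ ℓ) {σ s : ℝ} (hs : 0 < s) (hsσ : s ≤ σ)
    (hσ : σ ^ 2 = edgeCountVariance n k p (Vdeg G)) (z : ℝ) :
    |Pru (kSets n k) (fun S ↦ innerWeight (centredAdj p G) S / (n * σ) ≤ z) -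
      (gaussianReal 0 1).real (Set.Iic z)| ≤ cltConst s * (ℓ ^ 4 / (n : ℝ) ^ (1 / 4 : ℝ)) := by
  set y := (n : ℝ) ^ (1 / 4 : ℝ) with hy
  have hn1 : (1 : ℝ) ≤ n := by exact_mod_cast (by omega : 1 ≤ n)
  have hy1 : 1 ≤ y := Real.one_le_rpow hn1 (by norm_num)
  have hy4 : (n : ℝ) = y ^ 4 := by
    rw [hy, ← Real.rpow_mul_natCast (by linarith)]
    norm_num
  have hy2 : √(n : ℝ) = y ^ 2 := by
    rw [hy4, Real.sqrt_eq_iff_eq_sq (by positivity) (by positivity)]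
    ring
  have hincr (S : Finset (Fin n)) (hS : ¬HasIrregularSwaps p k ℓ G S) (t) (ht : t ∈ S ×ˢ Sᶜ) :
      |innerWeightIncr (centredAdj p G) S t| ≤ ℓ * √n ∧
        |poissonSolIncr (centredAdj p G) ((k - 1) / n) S t| ≤ ℓ * √n := by
    have := fun h ↦ hS (Or.inl ⟨t, ht, h⟩)
    exact ⟨(not_le.1 fun h ↦ this (Or.inr h)).le, (not_le.1 fun h ↦ this (Or.inl h)).le⟩
  have hvar (S : Finset (Fin n)) (hS : ¬HasIrregularSwaps p k ℓ G S) :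
      |swapVariance (centredAdj p G) ((k - 1) / n) S - σ ^ 2| ≤ 53 * (ℓ ^ 2 / √n) := by
    have hmean := not_le.1 fun h ↦ hS (Or.inr h)
    have hclose := hG.abs_expectedSwapVariance_sub_le hn hk hkn hp hℓ
    rw [hσ]
    linarith [abs_sub_le (swapVariance (centredAdj p G) ((k - 1) / n) S)
      (expectedSwapVariance n k p) (edgeCountVariance n k p (Vdeg G))]
  have hstein := abs_Pru_innerWeight_le_sub_stdGaussian_le (centredAdj_comm p G)
    (centredAdj_self p G) (sum_centredAdj hGE hpG) (abs_centredAdj_le hp G)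
    (by rw [Fintype.card_fin]; omega) (by omega : 1 ≤ k) (by rw [Fintype.card_fin]; omega)
    (by rw [Fintype.card_fin, div_mul_cancel₀ _ (by positivity)]) (hs.trans_le hsσ)
    (by positivity) (by positivity) (inv_pos.2 (by linarith)) (inv_le_one_of_one_le₀ hy1) hG.1
    (fun S _ ↦ hvar S) (fun S _ ↦ hincr S) z
  rw [Fintype.card_fin] at hstein
  refine hstein.trans ((le_of_eq ?_).trans (steinError_le_cltConst_mul hy1 hℓ hs hsσ))
  rw [hy2, hy4]

lemma gaussCdf_zero_one (z : ℝ) : gaussCdf 0 1 z = (gaussianReal 0 1).real (Set.Iic z) := by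
  rw [gaussCdf, Real.toNNReal_one, Measure.real]

lemma Wfun_eq_innerWeight_div (hGE : G ⊆ completeEdges n) (hp : p = M / Nr n)
    {S : Finset (Fin n)} (hS : S ∈ kSets n k) :
    Wfun n M k G S = innerWeight (centredAdj p G) S / n := by
  rw [Wfun, muP, innerWeight_centredAdj p hGE, (mem_powersetCard.1 hS).2, hp, mul_div_assoc]

lemma IsSwapRegular.abs_Pru_Wfun_le_sub_gaussCdf_le (hG : IsSwapRegular p k ℓ G)
    (hGM : G ∈ graphsM n M) (hn : 6 ≤ n) (hk : 2 ≤ k) (hkn : k + 2 ≤ n) (hδ : 0 < δ)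
    (hp : p ∈ Set.Icc δ (1 - δ)) (hpM : p * Nr n = M) (hδk : δ * n ≤ k) (hδnk : δ * n ≤ n - k)
    (hℓ : 1 ≤ ℓ) (z : ℝ) :
    |Pru (kSets n k) (fun S ↦ Wfun n M k G S ≤ √(edgeCountVariance n k p (Vdeg G)) * z) -
      gaussCdf 0 1 z| ≤ cltConst (δ ^ 3 / 4) * (ℓ ^ 4 / (n : ℝ) ^ (1 / 4 : ℝ)) := by
  obtain ⟨hGE, hGcard⟩ := mem_powersetCard.1 (graphsM_eq_powersetCard n M ▸ hGM)
  have hpG : p * Nr n = G.card := hpM.trans (by rw [hGcard])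
  have hp01 : p ∈ Set.Icc 0 1 := ⟨hδ.le.trans hp.1, hp.2.trans (by linarith)⟩
  have hV : 0 ≤ Vdeg G := by
    rw [Vdeg_eq_sum_sq (by omega) hGE hpG]
    positivity
  have hvar : δ ^ 6 / 8 ≤ edgeCountVariance n k p (Vdeg G) :=
    le_edgeCountVariance hδ (by exact_mod_cast (by omega : 3 < n)) (by exact_mod_cast hk)
      (by exact_mod_cast hkn) hp hδk hδnk hV
  have hvar0 : 0 ≤ edgeCountVariance n k p (Vdeg G) := le_trans (by positivity) hvar
  set σ := √(edgeCountVariance n k p (Vdeg G))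
  have hσ : δ ^ 3 / 4 ≤ σ := Real.le_sqrt_of_sq_le <|
    calc (δ ^ 3 / 4) ^ 2 = δ ^ 6 / 16 := by ring
      _ ≤ δ ^ 6 / 8 := by gcongr; norm_num
      _ ≤ _ := hvar
  have hσ0 : 0 < σ := lt_of_lt_of_le (by positivity) hσ
  rw [gaussCdf_zero_one, Pru_congr fun S hS ↦ ?_]
  · exact hG.abs_Pru_innerWeight_div_le_sub_stdGaussian_le hGE hpG hn hk hkn hp01 hℓ
      (by positivity) hσ (Real.sq_sqrt hvar0) z
  · rw [Wfun_eq_innerWeight_div hGE (eq_div_of_mul_eq (Nr_pos (by omega)).ne' hpM) hS, ← div_div,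
      div_le_iff₀ hσ0, mul_comm]

lemma one_sub_exp_le_PrGnM (hn : 6 ≤ n) (hδ : 0 < δ) (hδn : 2 ≤ δ * n)
    (hp : (M : ℝ) / Nr n ∈ Set.Icc δ (1 - δ)) (hk : (k : ℝ) / n ∈ Set.Icc δ (1 - δ)) (hℓ : 1 ≤ ℓ)
    (hexp : 128 * (n : ℝ) ^ 7 * Real.exp (-(ℓ ^ 2 / 288)) ≤ Real.exp (-ℓ)) :
    1 - Real.exp (-ℓ) ≤ PrGnM n M fun G ↦ ∀ z : ℝ,
      |Pru (kSets n k) (fun S ↦ Wfun n M k G S ≤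
          √(edgeCountVariance n k (M / Nr n) (Vdeg G)) * z) - gaussCdf 0 1 z| ≤
        cltConst (δ ^ 3 / 4) * (ℓ ^ 4 / (n : ℝ) ^ (1 / 4 : ℝ)) := by
  have hn0 : (0 : ℝ) < n := by exact_mod_cast (by omega : 0 < n)
  have hN : 0 < Nr n := Nr_pos (by omega)
  have hδk : δ * n ≤ k := (le_div_iff₀ hn0).1 hk.1
  have hδnk : δ * n ≤ n - k := by linarith [(div_le_iff₀ hn0).1 hk.2]
  have hk2 : 2 ≤ k := by exact_mod_cast hδn.trans hδk
  have hkn : k + 2 ≤ n := by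
    have : (k : ℝ) + 2 ≤ n := by linarith
    exact_mod_cast this
  have hpM : (M : ℝ) / Nr n * Nr n = M := div_mul_cancel₀ _ hN.ne'
  have hM : M < (completeEdges n).card := by
    have : (M : ℝ) < Nr n := (div_lt_one hN).1 (by linarith [hp.2])
    rw [← cast_card_completeEdges] at this
    exact_mod_cast this
  have hgraphs : (graphsM n M).Nonempty := by
    rw [graphsM_eq_powersetCard]
    exact powersetCard_nonempty.2 hM.le
  have hirregular := Pru_graphsM_not_isSwapRegular_le (by omega) hM hpM (by omega : 1 ≤ k)
    (by omega) hℓ hexp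
  rw [Pru_not hgraphs, sub_le_comm] at hirregular
  exact hirregular.trans (Pru_mono fun G hGM hG z ↦
    hG.abs_Pru_Wfun_le_sub_gaussCdf_le hGM hn hk2 hkn hδ hp hpM hδk hδnk hℓ z)

lemma eventually_pow_mul_exp_neg_rpow_sq_le {τ : ℝ} (hτ : 0 < τ) : ∀ᶠ n : ℕ in Filter.atTop,
    128 * (n : ℝ) ^ 7 * Real.exp (-(((n : ℝ) ^ τ) ^ 2 / 288)) ≤ Real.exp (-(n : ℝ) ^ τ) := by
  have hscale : Filter.Tendsto (fun n : ℕ ↦ (n : ℝ) ^ τ) Filter.atTop Filter.atTop :=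
    (tendsto_rpow_atTop hτ).comp tendsto_natCast_atTop_atTop
  have hlimit := (tendsto_rpow_mul_exp_neg_mul_atTop_nhds_zero (7 / τ) 1 one_pos).comp hscale
  filter_upwards [hlimit.eventually (gt_mem_nhds (by norm_num : (0 : ℝ) < 1 / 128)),
    hscale.eventually_ge_atTop 576] with n hsmall hlarge
  simp only [Function.comp, neg_mul, one_mul] at hsmall
  rw [← Real.rpow_mul n.cast_nonneg, mul_div_cancel₀ _ hτ.ne',
    (by norm_num : (7 : ℝ) = (7 : ℕ)), Real.rpow_natCast] at hsmall
  set ℓ := (n : ℝ) ^ τ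
  have hsq : Real.exp (-(ℓ ^ 2 / 288)) ≤ Real.exp (-ℓ) * Real.exp (-ℓ) := by
    rw [← Real.exp_add, Real.exp_le_exp]
    nlinarith
  calc 128 * (n : ℝ) ^ 7 * Real.exp (-(ℓ ^ 2 / 288))
      ≤ 128 * (n : ℝ) ^ 7 * (Real.exp (-ℓ) * Real.exp (-ℓ)) := by gcongr
    _ = 128 * ((n : ℝ) ^ 7 * Real.exp (-ℓ)) * Real.exp (-ℓ) := by ring
    _ ≤ 1 * Real.exp (-ℓ) := by gcongr; linarith
    _ = _ := one_mul _

end CentralLimit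

/-- Lemma 2.8: CLT with graph-dependent variance `Σ₁₁`.
Fix `δ, ε > 0`. There are `C > 0`, `η > 0`, `n₀` such that for all `n ≥ n₀` and `M, k` with
`M/N, k/n ∈ [δ, 1-δ]`, with probability at least `1 - exp(-n^η)` over `G_{n,M}`: for all
`z ∈ ℝ`, `|P_S(W ≤ √Σ₁₁·z) - P(Z' ≤ z)| ≤ C·n^(-1/4+ε)` with `Z'` standard normal and
`Σ₁₁ = (2KK̄/(n²N²(n-2)(n-3)))·(M(N-M) + ((k-2)/(k̄-1))·N·V)`. -/
theorem stmt_10 (δ ε : ℝ) (hδ : 0 < δ) (hε : 0 < ε) :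
    ∃ C > (0:ℝ), ∃ η > (0:ℝ), ∃ n₀ : ℕ, ∀ n ≥ n₀, ∀ M k : ℕ,
      δ ≤ (M : ℝ) / Nr n → (M : ℝ) / Nr n ≤ 1 - δ →
      δ ≤ (k : ℝ) / n → (k : ℝ) / n ≤ 1 - δ →
      PrGnM n M (fun G =>
          let Sig11 : ℝ :=
            (2 * Kr k * Kr (n - k) / ((n:ℝ)^2 * (Nr n)^2 * ((n:ℝ) - 2) * ((n:ℝ) - 3))) *
              ((M:ℝ) * (Nr n - (M:ℝ)) +
                (((k:ℝ) - 2) / (((n - k : ℕ):ℝ) - 1)) * Nr n * Vdeg G)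
          ∀ z : ℝ,
            |Pru (kSets n k) (fun S => Wfun n M k G S ≤ Real.sqrt Sig11 * z) -
              gaussCdf 0 1 z|
            ≤ C * (n:ℝ) ^ (-(1/4 : ℝ) + ε))
        ≥ 1 - Real.exp (-(n:ℝ) ^ η) := by
  set τ := ε / 4 with hτε
  have hτ : 0 < τ := by positivity
  obtain ⟨n₀, hn₀⟩ := Filter.eventually_atTop.1 ((eventually_pow_mul_exp_neg_rpow_sq_le hτ).and
    ((Filter.eventually_ge_atTop 6).and
      (tendsto_natCast_atTop_atTop.eventually_ge_atTop (2 / δ))))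
  refine ⟨cltConst (δ ^ 3 / 4), by rw [cltConst]; positivity, τ, hτ, n₀, ?_⟩
  intro n hn M k hp hp' hk hk'
  obtain ⟨hexp, hn6, hδn⟩ := hn₀ n hn
  have hn0 : (0 : ℝ) < n := by exact_mod_cast (by omega : 0 < n)
  have hℓ : 1 ≤ (n : ℝ) ^ τ := Real.one_le_rpow (Nat.one_le_cast.2 (by omega)) hτ.le
  have hrate : (n : ℝ) ^ (-(1 / 4) + ε) = ((n : ℝ) ^ τ) ^ 4 / (n : ℝ) ^ (1 / 4 : ℝ) := by
    rw [← Real.rpow_mul_natCast hn0.le, ← Real.rpow_sub hn0, hτε]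
    congr 1
    push_cast
    ring
  have hkn : k ≤ n := Nat.cast_le.1 ((div_le_one hn0).1 (by linarith))
  simp only [hrate, ← edgeCountVariance_eq_mul_add (by omega) hkn
    (div_mul_cancel₀ _ (Nr_pos (by omega : 2 ≤ n)).ne')]
  exact one_sub_exp_le_PrGnM hn6 hδ ((div_le_iff₀' hδ).1 hδn) ⟨hp, hp'⟩ ⟨hk, hk'⟩ hℓ hexp
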